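/- arXiv:1104.4356 — 2 statements merged into one kernel-verified Lean document; each statement's English description precedes it below -/
import Mathlib

section
/- Let a, b be reals with 1 < a ≤ b, and let B₂, C₂ : [a,b] → ℝ_{>1} be continuously differentiable with B₂(p) < C₂(p) for all p ∈ [a,b]. Define Ê(t) = (1/(8π))·√t·ln t and h(p) = ∫_{B₂(p)}^{C₂(p)} dq/ln q + Ê(B₂(p)) + Ê(C₂(p)). If B₂ is weakly decreasing and C₂ is weakly increasing on [a,b], then h is weakly increasing on [a,b]; if instead B₂ is weakly increasing and C₂ is weakly decreasing, then h is weakly decreasing on [a,b]. -/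
open MeasureTheory Set

/-- The error bound `Ê(t) = √t · ln t / (8π)`. -/
noncomputable def Ehat (t : ℝ) : ℝ := Real.sqrt t * Real.log t / (8 * Real.pi)

/-- The function `h(p) = ∫_{B₂(p)}^{C₂(p)} dq / ln q + Ê(B₂(p)) + Ê(C₂(p))`. -/
noncomputable def hFun (B₂ C₂ : ℝ → ℝ) (p : ℝ) : ℝ :=
  (∫ q in (B₂ p)..(C₂ p), 1 / Real.log q) + Ehat (B₂ p) + Ehat (C₂ p)

lemma Ehat_hasDeriv (t : ℝ) (ht : 1 < t) :
    HasDerivAt Ehat ((Real.log t + 2) / (16 * Real.pi * Real.sqrt t)) t := by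
  have h0 : 0 < t := by linarith
  have hs : 0 < Real.sqrt t := Real.sqrt_pos.2 h0
  have hp := Real.pi_pos
  have h := ((Real.hasDerivAt_sqrt h0.ne').mul (Real.hasDerivAt_log h0.ne')).div_const
    (8 * Real.pi)
  refine HasDerivAt.congr_deriv h ?_
  have e : t⁻¹ = (Real.sqrt t)⁻¹ * (Real.sqrt t)⁻¹ := by
    rw [← mul_inv, Real.mul_self_sqrt h0.le]
  rw [e]
  field_simp
  ring

lemma Ehat_deriv_le (t : ℝ) (ht : 1 < t) :
    (Real.log t + 2) / (16 * Real.pi * Real.sqrt t) ≤ 1 / Real.log t := by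
  have h0 : 0 < t := by linarith
  have hs : 0 < Real.sqrt t := Real.sqrt_pos.2 h0
  have hL : 0 < Real.log t := Real.log_pos ht
  have hp := Real.pi_gt_three
  have hq : 1 + Real.log t / 2 + (Real.log t / 2) ^ 2 / 2 ≤ Real.sqrt t := by
    have h1 := Real.quadratic_le_exp_of_nonneg (x := Real.log t / 2) (by positivity)
    rwa [← Real.log_sqrt h0.le, Real.exp_log hs, Real.log_sqrt h0.le] at h1
  rw [div_le_div_iff₀ (by positivity) hL]
  nlinarith [mul_pos (sub_pos.2 hp) hs]

lemma inv_log_integrable (x y : ℝ) (hx : 1 < x) (hy : 1 < y) :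
    IntervalIntegrable (fun q => 1 / Real.log q) volume x y := by
  apply ContinuousOn.intervalIntegrable
  have key : ∀ q ∈ Set.uIcc x y, 1 < q := fun q hq =>
    lt_of_lt_of_le (lt_min hx hy) hq.1
  refine ContinuousOn.div continuousOn_const (Real.continuousOn_log.mono ?_) ?_
  · intro q hq
    have := key q hq
    simp only [mem_compl_iff, mem_singleton_iff]
    linarith
  · intro q hq
    exact (Real.log_pos (key q hq)).ne'

lemma Ehat_sub_le (x y : ℝ) (hx : 1 < x) (hxy : x ≤ y) :
    Ehat y - Ehat x ≤ ∫ q in x..y, 1 / Real.log q := by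
  apply intervalIntegral.sub_le_integral_of_hasDeriv_right_of_le hxy
    (g' := fun t => (Real.log t + 2) / (16 * Real.pi * Real.sqrt t))
  · intro t ht
    exact (Ehat_hasDeriv t (lt_of_lt_of_le hx ht.1)).continuousAt.continuousWithinAt
  · intro t ht
    exact (Ehat_hasDeriv t (hx.trans ht.1)).hasDerivWithinAt
  · exact (intervalIntegrable_iff_integrableOn_Icc_of_le hxy).1
      (inv_log_integrable x y hx (hx.trans_le hxy))
  · intro t ht
    exact Ehat_deriv_le t (hx.trans ht.1)

lemma Ehat_le (x y : ℝ) (hx : 1 < x) (hxy : x ≤ y) : Ehat x ≤ Ehat y := by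
  unfold Ehat
  have := Real.log_pos hx
  have := Real.pi_pos
  have := Real.log_le_log (by linarith) hxy
  gcongr

lemma core (B' B C C' : ℝ) (h1 : 1 < B') (h2 : B' ≤ B) (h3 : B < C) (h4 : C ≤ C') :
    (∫ q in B..C, 1 / Real.log q) + Ehat B + Ehat C ≤
    (∫ q in B'..C', 1 / Real.log q) + Ehat B' + Ehat C' := by
  have hB : 1 < B := by linarith
  have hC : 1 < C := by linarith
  have hC' : 1 < C' := by linarith
  have e1 := intervalIntegral.integral_add_adjacent_intervals
    (inv_log_integrable B' B h1 hB) (inv_log_integrable B C hB hC)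
  have e2 := intervalIntegral.integral_add_adjacent_intervals
    (inv_log_integrable B' C h1 hC) (inv_log_integrable C C' hC hC')
  have := Ehat_sub_le B' B h1 h2
  have := Ehat_sub_le C C' hC h4
  have := Ehat_le C C' hC h4
  linarith

/-- Analytic core of the monotonicity criterion (Lemma 3.4 of the paper). -/
theorem monotonicity_criterion
    (a b : ℝ) (ha : 1 < a) (hab : a ≤ b)
    (B₂ C₂ : ℝ → ℝ)
    (hB₂_diff : ContDiffOn ℝ 1 B₂ (Set.Icc a b))
    (hC₂_diff : ContDiffOn ℝ 1 C₂ (Set.Icc a b))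
    (hB₂_gt : ∀ p ∈ Set.Icc a b, 1 < B₂ p)
    (hBC : ∀ p ∈ Set.Icc a b, B₂ p < C₂ p) :
    (AntitoneOn B₂ (Set.Icc a b) → MonotoneOn C₂ (Set.Icc a b) →
      MonotoneOn (hFun B₂ C₂) (Set.Icc a b)) ∧
    (MonotoneOn B₂ (Set.Icc a b) → AntitoneOn C₂ (Set.Icc a b) →
      AntitoneOn (hFun B₂ C₂) (Set.Icc a b)) := by
  constructor
  · intro hB hC p hp r hr hpr
    exact core _ _ _ _ (hB₂_gt r hr) (hB hp hr hpr) (hBC p hp) (hC hp hr hpr)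
  · intro hB hC p hp r hr hpr
    exact core _ _ _ _ (hB₂_gt p hp) (hB hp hr hpr) (hBC r hr) (hC hp hr hpr)
end

section
/- Assume the Riemann Hypothesis. There exists an absolute constant C > 0 such that for all real r and x with r > 1, ln x > 2·ln r, and √x / r ≥ 2657, there exists ã ∈ [(1 − ln r/(ln x + ln r))², (1 + 2·ln r/(ln x − 2·ln r))²] with |N^{DM}_r(x) − ã·(4x/ln²x)·(ln r − (ln r)/r)| ≤ C·x^{3/4}·r^{1/2}, where N^{DM}_r(x) = #{(p,q) : p, q prime, p/r < q < r·p and x/r < p·q ≤ x}. -/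
/-- Prime-pair count of the de Weger notion: ordered pairs of primes `(p,q)` with
`p/r < q < r·p` and `x/r < p·q ≤ x`. -/
noncomputable def NDM (r x : ℝ) : ℕ :=
  Nat.card {pq : ℕ × ℕ // pq.1.Prime ∧ pq.2.Prime ∧
    (pq.1 : ℝ) / r < (pq.2 : ℝ) ∧ (pq.2 : ℝ) < r * (pq.1 : ℝ) ∧
    x / r < (pq.1 : ℝ) * (pq.2 : ℝ) ∧ (pq.1 : ℝ) * (pq.2 : ℝ) ≤ x}

section Aux
open Complex MeasureTheory Set Filter Topology

lemma int_aux {f : ℝ → ℂ} (hf : Measurable f) {C a : ℝ} (hC : ∀ u, 1 < u → ‖f u‖ ≤ C * u ^ a)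
    {w : ℂ} (h : a + w.re < -1) : IntegrableOn (fun u : ℝ => f u * (u : ℂ) ^ w) (Ioi 1) := by
  have hi : IntegrableOn (fun u : ℝ => C * u ^ (a + w.re)) (Ioi 1) :=
    (integrableOn_Ioi_rpow_of_lt h one_pos).const_mul C
  refine Integrable.mono' hi ?_ ?_
  · apply AEStronglyMeasurable.mul hf.aestronglyMeasurable
    apply ContinuousOn.aestronglyMeasurable _ measurableSet_Ioi
    intro t ht
    exact (continuousAt_ofReal_cpow_const _ _ (Or.inr (zero_lt_one.trans ht).ne')).continuousWithinAt
  · filter_upwards [ae_restrict_mem measurableSet_Ioi] with t ht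
    have h0 : (0:ℝ) < t := zero_lt_one.trans ht
    rw [norm_mul, norm_cpow_eq_rpow_re_of_pos h0, Real.rpow_add h0, ← mul_assoc]
    gcongr
    exact hC t ht

noncomputable def zJ (s : ℂ) : ℂ := ∫ u in Ioi (1:ℝ), ((Int.fract u : ℝ) : ℂ) * (u : ℂ) ^ (-(s+1))

lemma fract_meas : Measurable (fun u : ℝ => ((Int.fract u : ℝ) : ℂ)) :=
  Complex.measurable_ofReal.comp measurable_fract

lemma fract_bd (u : ℝ) : ‖((Int.fract u : ℝ) : ℂ)‖ ≤ 1 := by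
  rw [norm_real, Real.norm_of_nonneg (Int.fract_nonneg u)]
  exact (Int.fract_lt_one u).le

lemma zJ_norm {s : ℂ} (hs : 1/2 < s.re) : ‖zJ s‖ ≤ 2 := by
  have : ‖zJ s‖ ≤ ∫ u in Ioi (1:ℝ), u ^ (-(s.re+1)) := by
    unfold zJ
    apply norm_integral_le_of_norm_le (integrableOn_Ioi_rpow_of_lt (by linarith) one_pos)
    filter_upwards [ae_restrict_mem measurableSet_Ioi] with t ht
    have h0 : (0:ℝ) < t := zero_lt_one.trans ht
    rw [norm_mul, norm_cpow_eq_rpow_re_of_pos h0]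
    calc _ ≤ 1 * t ^ (-(s+1)).re := by gcongr; exact fract_bd t
      _ = _ := by simp
  rw [integral_Ioi_rpow_of_lt (by linarith) one_pos] at this
  simp only [Real.one_rpow] at this
  refine this.trans ?_
  rw [show -(s.re + 1) + 1 = - s.re by ring, neg_div_neg_eq, div_le_iff₀ (by linarith)]
  linarith

lemma zJ_diff {s : ℂ} (hs : 0 < s.re) : DifferentiableAt ℂ zJ s := by
  let f : ℝ → ℂ := (Ioi (1:ℝ)).indicator (fun u : ℝ => ((Int.fract u : ℝ) : ℂ))
  have hf : zJ = fun s => mellin f (-s) := by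
    ext s
    unfold zJ mellin
    have : ∀ t : ℝ, (t:ℂ) ^ (-s - 1) • f t = (Ioi (1:ℝ)).indicator
        (fun u : ℝ => ((Int.fract u : ℝ) : ℂ) * (u:ℂ) ^ (-(s+1))) t := by
      intro t
      by_cases h : t ∈ Ioi (1:ℝ)
      · simp only [f, indicator_of_mem h, smul_eq_mul]; rw [mul_comm]; congr 2; ring
      · simp [f, indicator_of_notMem h]
    simp_rw [this]
    rw [setIntegral_indicator measurableSet_Ioi]
    rw [inter_eq_right.mpr (Ioi_subset_Ioi zero_le_one)]
  have hfm : Measurable f := fract_meas.indicator measurableSet_Ioi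
  have hfb : ∀ u, ‖f u‖ ≤ 1 := by
    intro u
    by_cases h : u ∈ Ioi (1:ℝ)
    · simp only [f, indicator_of_mem h]; exact fract_bd u
    · simp [f, indicator_of_notMem h]
  rw [hf]
  have : DifferentiableAt ℂ (mellin f) (-s) := by
    apply mellin_differentiableAt_of_isBigO_rpow (a := 0) (b := (-s).re - 1)
    · apply LocallyIntegrable.locallyIntegrableOn
      exact (locallyIntegrable_const (1:ℝ)).mono hfm.aestronglyMeasurable
        (Eventually.of_forall fun u => by simpa using hfb u)
    · apply Asymptotics.IsBigO.of_bound 1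
      filter_upwards with u
      simpa using hfb u
    · simpa using hs
    · apply Asymptotics.IsBigO.of_bound 1
      filter_upwards [nhdsWithin_le_nhds (Iio_mem_nhds (show (0:ℝ) < 1 by norm_num))] with u hu
      have : f u = 0 := by
        apply indicator_of_notMem; simp at hu ⊢; exact hu.le
      rw [this]; simp
    · linarith
  exact this.comp s differentiableAt_id.neg

lemma zeta1_eq_of_one_lt {s : ℂ} (hs : 1 < s.re) :
    riemannZeta₁ s = s - s * (s - 1) * zJ s := by
  have hs1 : s - 1 ≠ 0 := by
    intro h; rw [sub_eq_zero] at h; rw [h] at hs; simp at hs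
  have hz := riemannZeta_eq_inv_sub_mul (sub_ne_zero.mp hs1)
  have h1 := LSeries_eq_mul_integral_of_nonneg (fun _ => 1) (r := 1) zero_le_one hs (by
    simp only [Finset.sum_const, Nat.card_Icc, Real.rpow_one]
    simpa using Asymptotics.isBigO_refl _ _) (fun _ => zero_le_one)
  have h2 : LSeries (fun n => ((1:ℝ):ℂ)) s = riemannZeta s := by
    rw [← LSeries_one_eq_riemannZeta hs]; congr 1
  rw [h2] at h1
  have h3 : (∫ (t : ℝ) in Ioi 1, (∑ k ∈ Finset.Icc 1 ⌊t⌋₊, ((1:ℝ):ℂ)) * (t:ℂ) ^ (-(s + 1)))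
      = 1 / (s - 1) - zJ s := by
    have e : EqOn (fun t : ℝ => (∑ k ∈ Finset.Icc 1 ⌊t⌋₊, ((1:ℝ):ℂ)) * (t:ℂ) ^ (-(s + 1)))
        (fun t : ℝ => (t:ℂ) ^ (-s) - ((Int.fract t : ℝ) : ℂ) * (t:ℂ) ^ (-(s + 1))) (Ioi 1) := by
      intro t ht
      have h0 : (0:ℝ) < t := zero_lt_one.trans ht
      have h0' : (t:ℂ) ≠ 0 := by exact_mod_cast h0.ne'
      have : (∑ k ∈ Finset.Icc 1 ⌊t⌋₊, ((1:ℝ):ℂ)) = (t:ℂ) - ((Int.fract t : ℝ) : ℂ) := by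
        simp only [ofReal_one, Finset.sum_const, Nat.card_Icc, add_tsub_cancel_right, nsmul_eq_mul, mul_one]
        rw [← ofReal_sub, Int.self_sub_fract, ← natCast_floor_eq_intCast_floor h0.le]
        simp
      simp only [this]
      rw [sub_mul, neg_add, cpow_add _ _ h0', cpow_neg_one]
      field_simp
    rw [setIntegral_congr_fun measurableSet_Ioi e, integral_sub, integral_Ioi_cpow_of_lt _ one_pos]
    · unfold zJ
      congr 1
      rw [ofReal_one, one_cpow, show -s + 1 = -(s - 1) by ring, neg_div_neg_eq]
    · simpa using hs
    · exact integrableOn_Ioi_cpow_of_lt (by simpa using hs) one_pos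
    · exact int_aux fract_meas (C := 1) (a := 0) (fun u _ => by simpa using fract_bd u)
        (by simp; linarith)
  rw [h3] at h1
  rw [h1] at hz
  have : riemannZeta₁ s = (s - 1) * (s * (1 / (s - 1) - zJ s)) := by
    rw [hz]; field_simp
  rw [this]; field_simp

lemma zeta1_eq {s : ℂ} (hs : 0 < s.re) :
    riemannZeta₁ s = s - s * (s - 1) * zJ s := by
  have hU : IsOpen {s : ℂ | 0 < s.re} := isOpen_lt continuous_const continuous_re
  have hz : AnalyticOnNhd ℂ riemannZeta₁ {s : ℂ | 0 < s.re} :=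
    differentiable_riemannZeta₁.differentiableOn.analyticOnNhd hU
  have hj : AnalyticOnNhd ℂ (fun s => s - s * (s - 1) * zJ s) {s : ℂ | 0 < s.re} := by
    apply DifferentiableOn.analyticOnNhd _ hU
    intro z hz
    have := zJ_diff hz
    exact DifferentiableAt.differentiableWithinAt (by fun_prop)
  have := hz.eqOn_of_preconnected_of_eventuallyEq hj
    (convex_halfSpace_re_gt 0).isPreconnected (z₀ := 2) (by simp) (by
      have : {s : ℂ | 1 < s.re} ∈ 𝓝 (2:ℂ) :=
        (isOpen_lt continuous_const continuous_re).mem_nhds (by simp)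
      filter_upwards [this] with z hz
      exact zeta1_eq_of_one_lt hz)
  exact this hs

lemma zeta1_norm {s : ℂ} (hs : 1/2 < s.re) : ‖riemannZeta₁ s‖ ≤ 3 * (1 + ‖s‖) ^ 2 := by
  rw [zeta1_eq (by linarith)]
  have h1 := zJ_norm hs
  have h2 : ‖s - 1‖ ≤ ‖s‖ + 1 := by simpa using norm_sub_le s 1
  have h3 := norm_sub_le s (s * (s-1) * zJ s)
  rw [norm_mul, norm_mul] at h3
  have h0 := norm_nonneg s
  have : ‖s‖ * ‖s - 1‖ * ‖zJ s‖ ≤ ‖s‖ * (‖s‖ + 1) * 2 := by gcongr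
  nlinarith

lemma zeta1_ne (hRH : RiemannHypothesis) {s : ℂ} (hs : 1/2 < s.re) : riemannZeta₁ s ≠ 0 := by
  intro h
  by_cases h1 : s = 1
  · rw [h1, riemannZeta₁_one] at h; exact one_ne_zero h
  · have := riemannZeta_eq_inv_sub_mul h1
    rw [h, mul_zero] at this
    have := hRH s this (by
      rintro ⟨n, hn⟩
      rw [hn] at hs
      simp at hs
      have : (0:ℝ) ≤ n := n.cast_nonneg
      norm_num at hs
      linarith) h1
    linarith

lemma zeta1_lower : ∃ c : ℝ, 0 < c ∧ ∀ t : ℝ, c ≤ ‖riemannZeta₁ (2 + t * I)‖ := by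
  obtain ⟨K, hK⟩ : Summable (fun n : ℕ => 1 / (n:ℝ)^2) := Real.summable_one_div_nat_pow.mpr one_lt_two
  have hμ : ∀ s : ℂ, s.re = 2 → ‖LSeries (fun n => ((ArithmeticFunction.moebius n : ℤ) : ℂ)) s‖ ≤ K := by
    intro s hs
    apply tsum_of_norm_bounded hK
    intro n
    rw [LSeries.norm_term_eq]
    split_ifs with h
    · positivity
    · rw [hs]
      have : ‖((ArithmeticFunction.moebius n : ℤ) : ℂ)‖ ≤ 1 := by
        rw [Complex.norm_intCast]
        exact_mod_cast ArithmeticFunction.abs_moebius_le_one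
      rw [show (2:ℝ) = ((2:ℕ):ℝ) by norm_num, Real.rpow_natCast]
      gcongr
  have key : ∀ t : ℝ, 1 ≤ ‖riemannZeta₁ (2 + t * I)‖ * K := by
    intro t
    set s : ℂ := 2 + t * I with hs
    have hre : s.re = 2 := by simp [hs]
    have hs1 : s ≠ 1 := by intro h; rw [h] at hre; norm_num at hre
    have h1 := ArithmeticFunction.LSeries_zeta_mul_Lseries_moebius (s := s) (by rw [hre]; norm_num)
    rw [ArithmeticFunction.LSeries_zeta_eq_riemannZeta (by rw [hre]; norm_num),
      riemannZeta_eq_inv_sub_mul hs1] at h1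
    have h2 := congrArg norm h1
    rw [norm_mul, norm_mul, norm_inv, norm_one] at h2
    have h3 : 1 ≤ ‖s - 1‖ := by
      have := Complex.abs_re_le_norm (s - 1)
      rw [sub_re, hre, one_re] at this
      norm_num at this
      exact this
    have h4 : ‖s-1‖⁻¹ ≤ 1 := inv_le_one_of_one_le₀ h3
    rw [← h2]
    have := hμ s hre
    calc _ ≤ 1 * ‖riemannZeta₁ s‖ * K := by gcongr
      _ = _ := by ring
  have hKpos : 0 < K := by
    by_contra h
    have := key 0
    have h2 : ‖riemannZeta₁ (2 + (0:ℝ) * I)‖ * K ≤ 0 :=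
      mul_nonpos_of_nonneg_of_nonpos (norm_nonneg _) (not_lt.mp h)
    linarith
  refine ⟨1 / K, by positivity, fun t => ?_⟩
  rw [div_le_iff₀ hKpos]
  exact key t

lemma log_branch {F : ℂ → ℂ} {c : ℂ} {R : ℝ} (hR : 0 < R) (hF : Differentiable ℂ F)
    (hne : ∀ z ∈ Metric.ball c R, F z ≠ 0) :
    ∃ g : ℂ → ℂ, g c = 0 ∧ (∀ z ∈ Metric.ball c R, HasDerivAt g (deriv F z / F z) z) ∧
      ∀ z ∈ Metric.ball c R, F z = F c * exp (g z) := by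
  have hd : DifferentiableOn ℂ (fun z => deriv F z / F z) (Metric.ball c R) := by
    apply DifferentiableOn.div
    · exact hF.deriv.differentiableOn
    · exact hF.differentiableOn
    · exact hne
  obtain ⟨g, hg0, hg⟩ := hd.isExactOn_ball.with_val_at c 0
  refine ⟨g, hg0, hg, ?_⟩
  have hc : c ∈ Metric.ball c R := Metric.mem_ball_self hR
  have hder : ∀ z ∈ Metric.ball c R, HasDerivAt (fun z => F z * exp (-g z)) 0 z := by
    intro z hz
    have h1 := (hF z).hasDerivAt.mul ((hg z hz).neg.cexp)
    have e : F z * (deriv F z / F z) = deriv F z := mul_div_cancel₀ _ (hne z hz)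
    have e2 : deriv F z * exp (-g z) + F z * (exp (-g z) * -(deriv F z / F z)) = 0 := by
      linear_combination -exp (-g z) * e
    exact e2 ▸ h1
  have hconst : ∀ z ∈ Metric.ball c R, F z * exp (-g z) = F c * exp (-g c) := by
    intro z hz
    refine (convex_ball c R).is_const_of_fderivWithin_eq_zero (𝕜 := ℂ) (f := fun z => F z * exp (-g z)) ?_ ?_ hz hc
    · intro y hy; exact (hder y hy).differentiableAt.differentiableWithinAt
    · intro y hy
      rw [fderivWithin_of_isOpen Metric.isOpen_ball hy]
      have := (hder y hy).hasFDerivAt.fderiv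
      rw [this]; ext; simp
  intro z hz
  have := hconst z hz
  rw [hg0, neg_zero, exp_zero, mul_one] at this
  rw [← this, mul_assoc, ← exp_add]; simp

lemma logDeriv_bound (hRH : RiemannHypothesis) : ∃ K : ℝ, 0 < K ∧ ∀ s : ℂ, 0.55 ≤ s.re → s.re ≤ 2 →
    ‖deriv riemannZeta₁ s / riemannZeta₁ s‖ ≤ K * (1 + |s.im|) ^ (1/20 : ℝ) := by
  obtain ⟨c0, hc0, hlow⟩ := zeta1_lower
  set B : ℝ := |Real.log (75 / c0)| + 1 with hB
  have hBpos : 0 < B := by positivity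
  refine ⟨5000 * (B + 40), by positivity, ?_⟩
  intro s hs1 hs2
  set t := s.im with ht
  set c : ℂ := 2 + t * I with hc
  have hcre : c.re = 2 := by simp [hc]
  have hcim : c.im = t := by simp [hc]
  have hcn : ‖c‖ ≤ 2 + |t| := by
    calc ‖c‖ ≤ ‖(2:ℂ)‖ + ‖(t:ℂ) * I‖ := norm_add_le _ _
      _ = _ := by simp
  have hball : ∀ z ∈ Metric.ball c (3/2), 1/2 < z.re := by
    intro z hz
    rw [Metric.mem_ball, dist_eq] at hz
    have := (abs_le.mp (Complex.abs_re_le_norm (z - c))).1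
    rw [sub_re, hcre] at this
    linarith
  obtain ⟨g, hg0, hg, hgF⟩ := log_branch (c := c) (R := 3/2) (by norm_num) differentiable_riemannZeta₁
    (fun z hz => zeta1_ne hRH (hball z hz))
  set M : ℝ := B + 2 * Real.log (1 + |t|) with hM
  have hlog : 0 ≤ Real.log (1 + |t|) := Real.log_nonneg (by linarith [abs_nonneg t])
  have hMpos : 0 < M := by positivity
  have hre : ∀ z ∈ Metric.ball c (3/2), (g z).re ≤ M := by
    intro z hz
    have h1 := congrArg norm (hgF z hz)
    rw [norm_mul, norm_exp] at h1
    have h2 := zeta1_norm (hball z hz)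
    have h3 : ‖z‖ ≤ 2 + |t| + 3/2 := by
      rw [Metric.mem_ball, dist_eq] at hz
      calc ‖z‖ = ‖c + (z - c)‖ := by congr 1; ring
        _ ≤ ‖c‖ + ‖z - c‖ := norm_add_le _ _
        _ ≤ _ := by linarith
    have h4 : 3 * (1 + ‖z‖)^2 ≤ 75 * (1 + |t|)^2 := by
      have : 1 + ‖z‖ ≤ 5 * (1 + |t|) := by linarith [abs_nonneg t]
      calc 3 * (1 + ‖z‖)^2 ≤ 3 * (5 * (1+|t|))^2 := by gcongr
        _ = _ := by ring
    have h5 : c0 * Real.exp (g z).re ≤ 75 * (1 + |t|)^2 := by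
      calc _ ≤ ‖riemannZeta₁ c‖ * Real.exp (g z).re := by gcongr; exact hlow t
        _ ≤ _ := by rw [← h1]; exact h2.trans h4
    have h6 : Real.exp (g z).re ≤ (75 / c0) * (1 + |t|)^2 := by
      rw [div_mul_eq_mul_div, le_div_iff₀ hc0]; linarith
    have h7 := Real.log_le_log (Real.exp_pos _) h6
    rw [Real.log_exp, Real.log_mul (by positivity) (by positivity), Real.log_pow] at h7
    push_cast at h7
    have := le_abs_self (Real.log (75 / c0))
    rw [hM, hB]; linarith
  have hf0 : DifferentiableOn ℂ (fun z => g (c + z)) (Metric.ball 0 (3/2)) := by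
    intro z hz
    have : c + z ∈ Metric.ball c (3/2) := by simpa [Metric.mem_ball, dist_eq] using hz
    exact ((hg _ this).differentiableAt.comp z (by fun_prop)).differentiableWithinAt
  have hbc : ∀ z ∈ Metric.ball (0:ℂ) (3/2), ‖z‖ ≤ 1.47 → ‖g (c + z)‖ ≤ 100 * M := by
    intro z hz hz2
    have := Complex.borelCaratheodory_zero hMpos hf0 (fun y hy => hre _ (by
      simpa [Metric.mem_ball, dist_eq] using hy)) (by norm_num) hz (by simp [hg0])
    refine this.trans ?_
    rw [div_le_iff₀ (by linarith)]
    nlinarith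
  have hsub : ‖s - c‖ ≤ 1.45 := by
    have : s - c = ((s.re - 2 : ℝ) : ℂ) := by
      apply Complex.ext <;> simp [hc, ht]
    rw [this, norm_real, Real.norm_eq_abs, abs_le]
    constructor <;> linarith
  have hmem : ∀ z ∈ Metric.closedBall s 0.02, ‖z - c‖ ≤ 1.47 := by
    intro z hz
    rw [Metric.mem_closedBall, dist_eq] at hz
    calc ‖z - c‖ = ‖(z - s) + (s - c)‖ := by congr 1; ring
      _ ≤ ‖z - s‖ + ‖s - c‖ := norm_add_le _ _
      _ ≤ _ := by linarith
  have hmem' : ∀ z ∈ Metric.closedBall s 0.02, z ∈ Metric.ball c (3/2) := by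
    intro z hz
    rw [Metric.mem_ball, dist_eq]
    linarith [hmem z hz]
  have hcauchy : ‖deriv g s‖ ≤ 100 * M / 0.02 := by
    apply norm_deriv_le_of_forall_mem_sphere_norm_le (by norm_num)
    · apply DifferentiableOn.diffContOnCl
      rw [closure_ball _ (by norm_num)]
      intro z hz
      exact (hg z (hmem' z hz)).differentiableAt.differentiableWithinAt
    · intro z hz
      have hz' := Metric.sphere_subset_closedBall hz
      have := hbc (z - c) (by
        have := hmem' z hz'
        rw [Metric.mem_ball, dist_eq] at this
        simpa [Metric.mem_ball] using this) (hmem z hz')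
      simpa using this
  rw [(hg s (hmem' s (Metric.mem_closedBall_self (by norm_num)))).deriv] at hcauchy
  refine hcauchy.trans ?_
  have h1 : Real.log (1 + |t|) ≤ (1 + |t|) ^ (1/20:ℝ) / (1/20) :=
    Real.log_le_rpow_div (by positivity) (by norm_num)
  have h2 : 1 ≤ (1 + |t|) ^ (1/20:ℝ) := Real.one_le_rpow (by linarith [abs_nonneg t]) (by norm_num)
  rw [hM]
  have : B ≤ B * (1 + |t|) ^ (1/20:ℝ) := le_mul_of_one_le_right hBpos.le h2
  norm_num at h1 ⊢
  norm_num at this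
  linarith

lemma fubini_aux {g : ℝ → ℝ} (hg : Measurable g) {C : ℝ} (hC : ∀ u, 1 < u → |g u| ≤ C * u)
    {s : ℂ} (hs : 1 < s.re) :
    ∫ u in Ioi (1:ℝ), ((∫ v in (1:ℝ)..u, g v : ℝ) : ℂ) * (u:ℂ) ^ (-(s+2))
      = (∫ v in Ioi (1:ℝ), (g v : ℂ) * (v:ℂ) ^ (-(s+1))) / (s+1) := by
  have hs1 : s + 1 ≠ 0 := by
    intro h; have := congrArg re h; simp at this; linarith
  have hgc : Measurable (fun v => (g v : ℂ)) := Complex.measurable_ofReal.comp hg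
  have hC' : ∀ u, 1 < u → ‖(g u : ℂ)‖ ≤ C * u ^ (1:ℝ) := by
    intro u hu; rw [norm_real, Real.norm_eq_abs, Real.rpow_one]; exact hC u hu
  let f : ℝ → ℝ → ℂ := fun v u => (Ioi v).indicator (fun u : ℝ => (g v : ℂ) * (u:ℂ) ^ (-(s+2))) u
  have hsub : ∀ v, 1 < v → Ioi (1:ℝ) ∩ Ioi v = Ioi v := fun v hv =>
    inter_eq_right.mpr (Ioi_subset_Ioi hv.le)
  have hfm : AEStronglyMeasurable (Function.uncurry f)
      ((volume.restrict (Ioi (1:ℝ))).prod (volume.restrict (Ioi (1:ℝ)))) := by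
    have : Function.uncurry f = {p : ℝ × ℝ | p.1 < p.2}.indicator
        (fun p => (g p.1 : ℂ) * (p.2:ℂ) ^ (-(s+2))) := by
      ext p; simp [Function.uncurry, f, indicator]
    rw [this]
    apply Measurable.aestronglyMeasurable
    apply Measurable.indicator _ (measurableSet_lt measurable_fst measurable_snd)
    have h2 : Measurable (fun p : ℝ × ℝ => (p.2 : ℂ)) := Complex.measurable_ofReal.comp measurable_snd
    exact (hgc.comp measurable_fst).mul (h2.pow_const _)
  have hint : Integrable (Function.uncurry f)
      ((volume.restrict (Ioi (1:ℝ))).prod (volume.restrict (Ioi (1:ℝ)))) := by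
    rw [integrable_prod_iff hfm]
    constructor
    · filter_upwards [ae_restrict_mem measurableSet_Ioi] with v hv
      have h0 : (0:ℝ) < v := zero_lt_one.trans hv
      simp only [Function.uncurry, f]
      rw [integrable_indicator_iff measurableSet_Ioi]
      have : IntegrableOn (fun u : ℝ => (g v : ℂ) * (u:ℂ) ^ (-(s+2))) (Ioi v) :=
        (integrableOn_Ioi_cpow_of_lt (by simp; linarith) h0).const_mul _
      rw [IntegrableOn, Measure.restrict_restrict measurableSet_Ioi, inter_comm, hsub v hv]
      exact this
    · have hi : IntegrableOn (fun v : ℝ => ‖(g v : ℂ) * (v:ℂ) ^ (-(s+1))‖ * (1 / (s.re + 1))) (Ioi 1) :=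
        (int_aux hgc hC' (by simp; linarith)).norm.mul_const _
      refine hi.congr_fun (fun v hv => ?_) measurableSet_Ioi
      have h0 : (0:ℝ) < v := zero_lt_one.trans hv
      simp only [Function.uncurry, f]
      simp_rw [norm_indicator_eq_indicator_norm]
      rw [setIntegral_indicator measurableSet_Ioi, hsub v hv]
      rw [norm_mul, norm_cpow_eq_rpow_re_of_pos h0]
      rw [setIntegral_congr_fun (g := fun u : ℝ => ‖(g v : ℂ)‖ * u ^ (-(s.re+2))) measurableSet_Ioi
        (fun u hu => by
          simp only
          rw [norm_mul, norm_cpow_eq_rpow_re_of_pos (h0.trans hu)]; simp)]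
      rw [integral_const_mul, integral_Ioi_rpow_of_lt (by linarith) h0]
      rw [show -(s.re + 2) + 1 = -(s.re + 1) by ring, neg_div_neg_eq]
      simp; ring
  have hswap := integral_integral_swap hint
  have e1 : ∫ v in Ioi (1:ℝ), ∫ u in Ioi (1:ℝ), f v u
      = (∫ v in Ioi (1:ℝ), (g v : ℂ) * (v:ℂ) ^ (-(s+1))) / (s+1) := by
    rw [← integral_div]
    apply setIntegral_congr_fun measurableSet_Ioi
    intro v hv
    have h0 : (0:ℝ) < v := zero_lt_one.trans hv
    simp only [f]
    rw [setIntegral_indicator measurableSet_Ioi, hsub v hv, integral_const_mul,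
      integral_Ioi_cpow_of_lt (by simp; linarith) h0, show -(s+2)+1 = -(s+1) by ring, neg_div_neg_eq]
    ring
  have e2 : ∫ u in Ioi (1:ℝ), ∫ v in Ioi (1:ℝ), f v u
      = ∫ u in Ioi (1:ℝ), ((∫ v in (1:ℝ)..u, g v : ℝ) : ℂ) * (u:ℂ) ^ (-(s+2)) := by
    apply setIntegral_congr_fun measurableSet_Ioi
    intro u hu
    have : ∀ v, f v u = (Iio u).indicator (fun v : ℝ => (g v : ℂ) * (u:ℂ) ^ (-(s+2))) v := by
      intro v; simp [f, indicator]
    simp only [this]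
    rw [setIntegral_indicator measurableSet_Iio, integral_mul_const, Ioi_inter_Iio,
      intervalIntegral.integral_of_le (le_of_lt hu), ← integral_Ioc_eq_integral_Ioo]
    rw [integral_complex_ofReal]
  rw [← e2, ← hswap, e1]

noncomputable def gPsi (u : ℝ) : ℝ := Chebyshev.psi u - u + 1

lemma gPsi_meas : Measurable gPsi :=
  (Chebyshev.psi_mono.measurable.sub measurable_id).add_const 1

lemma gPsi_bd (u : ℝ) (hu : 1 ≤ u) : |gPsi u| ≤ 10 * u := by
  have h1 := Chebyshev.psi_le_const_mul_self (x := u) (by linarith)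
  have h2 := Chebyshev.psi_nonneg u
  have h3 : Real.log 4 ≤ 2 := by
    rw [show (4:ℝ) = 2^2 by norm_num, Real.log_pow]; have := Real.log_two_lt_d9; push_cast; linarith
  unfold gPsi
  rw [abs_le]; constructor <;> nlinarith

noncomputable def zH (s : ℂ) : ℂ := -(deriv riemannZeta₁ s / riemannZeta₁ s)

lemma mellin_gPsi {s : ℂ} (hs : 1 < s.re) :
    ∫ u in Ioi (1:ℝ), (gPsi u : ℂ) * (u:ℂ) ^ (-(s+1)) = zH s / s := by
  have hs1 : s - 1 ≠ 0 := by
    intro h; rw [sub_eq_zero] at h; rw [h] at hs; simp at hs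
  have hs0 : s ≠ 0 := by rintro rfl; simp at hs; linarith
  have hpsi : ∀ n : ℕ, ∑ k ∈ Finset.Icc 1 n, ArithmeticFunction.vonMangoldt k = Chebyshev.psi n := by
    intro n
    rw [Chebyshev.psi, Nat.floor_natCast]; rfl
  have h1 := LSeries_eq_mul_integral_of_nonneg (fun n => ArithmeticFunction.vonMangoldt n) (r := 1)
    zero_le_one hs (by
      simp_rw [hpsi]
      apply Asymptotics.IsBigO.of_bound (Real.log 4 + 4)
      filter_upwards with n
      rw [Real.norm_of_nonneg (Chebyshev.psi_nonneg _), Real.rpow_one, Real.norm_of_nonneg (by positivity)]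
      exact Chebyshev.psi_le_const_mul_self (by positivity)) (fun _ => ArithmeticFunction.vonMangoldt_nonneg)
  rw [ArithmeticFunction.LSeries_vonMangoldt_eq_deriv_riemannZeta_div hs] at h1
  have hz := riemannZeta_eq_inv_sub_mul (sub_ne_zero.mp hs1)
  have hz' := deriv_riemannZeta_eq_neg_inv_sub_sq_mul_add (sub_ne_zero.mp hs1)
  have hne : riemannZeta₁ s ≠ 0 := by
    intro h; rw [h, mul_zero] at hz
    exact riemannZeta_ne_zero_of_one_lt_re hs hz
  have h2 : -deriv riemannZeta s / riemannZeta s = zH s + 1 / (s - 1) := by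
    rw [hz, hz', zH]; field_simp; ring
  have h3 : (∫ (t : ℝ) in Ioi 1, (∑ k ∈ Finset.Icc 1 ⌊t⌋₊, (ArithmeticFunction.vonMangoldt k : ℂ)) * (t:ℂ) ^ (-(s + 1)))
      = (∫ u in Ioi (1:ℝ), (gPsi u : ℂ) * (u:ℂ) ^ (-(s+1))) + (1 / (s - 1) - 1 / s) := by
    have e : EqOn (fun t : ℝ => (∑ k ∈ Finset.Icc 1 ⌊t⌋₊, (ArithmeticFunction.vonMangoldt k : ℂ)) * (t:ℂ) ^ (-(s + 1)))
        (fun t : ℝ => (gPsi t : ℂ) * (t:ℂ) ^ (-(s+1)) + ((t:ℂ) ^ (-s) - (t:ℂ) ^ (-(s + 1)))) (Ioi 1) := by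
      intro t ht
      have h0 : (0:ℝ) < t := zero_lt_one.trans ht
      have h0' : (t:ℂ) ≠ 0 := by exact_mod_cast h0.ne'
      have h5 : (∑ k ∈ Finset.Icc 1 ⌊t⌋₊, (ArithmeticFunction.vonMangoldt k : ℂ)) = (gPsi t : ℂ) + t - 1 := by
        rw [← ofReal_sum, hpsi, ← Chebyshev.psi_eq_psi_coe_floor, gPsi]; push_cast; ring
      have h6 : (t:ℂ) ^ (-s) = t * (t:ℂ) ^ (-(s+1)) := by
        rw [neg_add, cpow_add _ _ h0', cpow_neg_one]; field_simp
      simp only [h5, h6]; ring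
    rw [setIntegral_congr_fun measurableSet_Ioi e, integral_add, integral_sub,
      integral_Ioi_cpow_of_lt _ one_pos, integral_Ioi_cpow_of_lt _ one_pos]
    · congr 1
      rw [ofReal_one, one_cpow, one_cpow, show -s + 1 = -(s - 1) by ring,
        show -(s+1) + 1 = -s by ring, neg_div_neg_eq, neg_div_neg_eq]
    · simp; linarith
    · simp; linarith
    · exact integrableOn_Ioi_cpow_of_lt (by simpa using hs) one_pos
    · exact integrableOn_Ioi_cpow_of_lt (by simp; linarith) one_pos
    · exact int_aux (Complex.measurable_ofReal.comp gPsi_meas) (C := 10) (a := 1)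
        (fun u hu => by simpa using gPsi_bd u hu.le) (by simp; linarith)
    · exact (integrableOn_Ioi_cpow_of_lt (by simpa using hs) one_pos).sub
        (integrableOn_Ioi_cpow_of_lt (by simp; linarith) one_pos)
  rw [h3, h2] at h1
  have : s * (∫ u in Ioi (1:ℝ), (gPsi u : ℂ) * (u:ℂ) ^ (-(s+1))) = zH s := by
    have h7 : s * (1 / (s - 1) - 1 / s) = 1 / (s - 1) := by field_simp; ring
    linear_combination -h1 - h7
  rw [← this]; field_simp

noncomputable def gG (u : ℝ) : ℝ := ∫ v in (1:ℝ)..u, gPsi v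

lemma mellin_gG {s : ℂ} (hs : 1 < s.re) :
    ∫ u in Ioi (1:ℝ), (gG u : ℂ) * (u:ℂ) ^ (-(s+2)) = zH s / (s * (s + 1)) := by
  have := fubini_aux gPsi_meas (C := 10) (fun u hu => gPsi_bd u hu.le) hs
  rw [mellin_gPsi hs, div_div] at this
  exact this

noncomputable def zQ (s : ℂ) : ℂ := zH s / (s * (s + 1))

lemma zQ_diff (hRH : RiemannHypothesis) : DifferentiableOn ℂ zQ {s : ℂ | 1/2 < s.re} := by
  intro s hs
  have hs' : 1/2 < s.re := hs
  have h0 : s ≠ 0 := by rintro rfl; norm_num at hs'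
  have h1 : s + 1 ≠ 0 := by intro h; have := congrArg re h; simp at this; linarith
  have h2 := zeta1_ne hRH hs'
  have h3 : DifferentiableAt ℂ (deriv riemannZeta₁) s := differentiable_riemannZeta₁.deriv s
  have h4 : DifferentiableAt ℂ riemannZeta₁ s := differentiable_riemannZeta₁ s
  apply DifferentiableAt.differentiableWithinAt
  unfold zQ zH
  exact ((h3.div h4 h2).neg).div (by fun_prop) (mul_ne_zero h0 h1)

lemma zQ_bound (hRH : RiemannHypothesis) : ∃ K : ℝ, 0 < K ∧ ∀ s : ℂ, 0.55 ≤ s.re → s.re ≤ 2 →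
    ‖zQ s‖ ≤ K * (1 + |s.im|) ^ (-(39/20) : ℝ) := by
  obtain ⟨K, hK, h⟩ := logDeriv_bound hRH
  refine ⟨K * 9, by positivity, fun s h1 h2 => ?_⟩
  have h3 := h s h1 h2
  have hp : (0:ℝ) < 1 + |s.im| := by positivity
  have key : ∀ z : ℂ, 0.55 ≤ z.re → (1 + |z.im|) / 3 ≤ ‖z‖ := by
    intro z hz
    have a1 := Complex.abs_re_le_norm z
    have a2 := Complex.abs_im_le_norm z
    have a3 := le_abs_self z.re
    linarith
  have k1 := key s h1
  have k2 := key (s+1) (by simp; linarith)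
  simp only [add_im, one_im, add_zero] at k2
  rw [zQ, norm_div, norm_mul, zH, norm_neg]
  have e : (1 + |s.im|) ^ (-(39/20) : ℝ) = (1 + |s.im|) ^ (1/20 : ℝ) / ((1 + |s.im|) * (1 + |s.im|)) := by
    rw [← sq, ← Real.rpow_natCast, ← Real.rpow_sub hp]; norm_num
  calc _ ≤ (K * (1 + |s.im|) ^ (1/20 : ℝ)) / (((1 + |s.im|) / 3) * ((1 + |s.im|) / 3)) := by gcongr
    _ = _ := by rw [e]; field_simp; try norm_num

lemma gPsi_ii (a b : ℝ) : IntervalIntegrable gPsi volume a b := by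
  unfold gPsi
  exact ((Chebyshev.psi_mono.intervalIntegrable).sub (continuous_id.intervalIntegrable _ _)).add
    (continuous_const.intervalIntegrable _ _)

lemma gG_cont : Continuous gG := intervalIntegral.continuous_primitive gPsi_ii 1

lemma gG_bd (u : ℝ) (hu : 1 < u) : |gG u| ≤ 10 * u ^ 2 := by
  have := intervalIntegral.norm_integral_le_of_norm_le_const (a := 1) (b := u) (f := gPsi) (C := 10 * u)
    (fun x hx => by
      rw [uIoc_of_le hu.le] at hx
      exact (gPsi_bd x hx.1.le).trans (by linarith [hx.2]))
  rw [Real.norm_eq_abs, abs_of_pos (by linarith : 0 < u - 1)] at this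
  unfold gG
  nlinarith

lemma vert_int (hRH : RiemannHypothesis) {σ : ℝ} (h1 : 0.55 ≤ σ) (h2 : σ ≤ 2) :
    Integrable (fun y : ℝ => zQ (σ + y * I)) := by
  obtain ⟨K, hK, h⟩ := zQ_bound hRH
  have hi : Integrable (fun y : ℝ => K * (1 + ‖y‖) ^ (-(39/20) : ℝ)) :=
    (integrable_one_add_norm (by norm_num)).const_mul K
  refine hi.mono' ?_ ?_
  · apply Continuous.aestronglyMeasurable
    apply (zQ_diff hRH).continuousOn.comp_continuous (by fun_prop)
    intro y; simp; linarith
  · filter_upwards with y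
    have := h (σ + y * I) (by simpa using h1) (by simpa using h2)
    simpa using this

lemma inversion (hRH : RiemannHypothesis) {x : ℝ} (hx : 1 < x) :
    (gG x : ℂ) = (1 / (2 * Real.pi) : ℝ) • ∫ y : ℝ, (x:ℂ) ^ ((2 + y * I : ℂ) + 1) * zQ ((2:ℝ) + y * I) := by
  let f : ℝ → ℂ := (Ioi (1:ℝ)).indicator (fun u => (gG u : ℂ))
  have hm : ∀ s : ℂ, ∀ t : ℝ, (t:ℂ) ^ (s - 1) • f t = (Ioi (1:ℝ)).indicator
        (fun u : ℝ => (gG u : ℂ) * (u:ℂ) ^ (s - 1)) t := by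
    intro s t
    by_cases h : t ∈ Ioi (1:ℝ)
    · simp only [f, indicator_of_mem h, smul_eq_mul]; rw [mul_comm]
    · simp [f, indicator_of_notMem h]
  have hmel : ∀ s : ℂ, s.re < -2 → mellin f s = zQ (-s - 1) := by
    intro s hs
    unfold mellin
    simp_rw [hm]
    rw [setIntegral_indicator measurableSet_Ioi, inter_eq_right.mpr (Ioi_subset_Ioi zero_le_one)]
    have := mellin_gG (s := -s-1) (by simp; linarith)
    rw [zQ, ← this]
    simp only [show -(-s - 1 + 2) = s - 1 by ring]
  have hconv : MellinConvergent f ((-3:ℝ):ℂ) := by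
    unfold MellinConvergent
    simp_rw [hm]
    rw [IntegrableOn, integrable_indicator_iff measurableSet_Ioi, IntegrableOn,
      Measure.restrict_restrict measurableSet_Ioi, inter_eq_left.mpr (Ioi_subset_Ioi zero_le_one)]
    exact int_aux (Complex.measurable_ofReal.comp gG_cont.measurable) (C := 10) (a := 2)
        (fun u hu => by simpa using gG_bd u hu) (by simp; norm_num)
  have hV : VerticalIntegrable (mellin f) (-3) := by
    unfold VerticalIntegrable
    have h1 := (vert_int hRH (σ := 2) (by norm_num) le_rfl).comp_neg
    refine h1.congr (Eventually.of_forall fun y => ?_)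
    simp only
    rw [hmel _ (by simp; norm_num)]
    congr 1; push_cast; ring
  have hcont : ContinuousAt f x := by
    have : f =ᶠ[𝓝 x] fun u => (gG u : ℂ) := by
      filter_upwards [Ioi_mem_nhds hx] with u hu
      exact indicator_of_mem hu _
    exact (Complex.continuous_ofReal.comp gG_cont).continuousAt.congr this.symm
  have := mellinInv_mellin_eq (-3) f (zero_lt_one.trans hx) hconv hV hcont
  have hfx : f x = gG x := indicator_of_mem (show x ∈ Ioi (1:ℝ) from hx) _
  rw [hfx] at this
  rw [← this, mellinInv]
  congr 1
  rw [← integral_neg_eq_self]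
  congr 1
  ext y
  rw [hmel _ (by simp; norm_num), smul_eq_mul]
  congr 2 <;> (push_cast; ring)

lemma shift {f : ℂ → ℂ} (hf : DifferentiableOn ℂ f {s : ℂ | 1/2 < s.re}) {B : ℝ}
    (hB : ∀ s : ℂ, 0.55 ≤ s.re → s.re ≤ 2 → ‖f s‖ ≤ B * (1 + |s.im|) ^ (-(39/20) : ℝ)) :
    ∫ y : ℝ, f ((2:ℝ) + y * I) = ∫ y : ℝ, f ((0.55:ℝ) + y * I) := by
  have hint : ∀ σ : ℝ, 0.55 ≤ σ → σ ≤ 2 → Integrable (fun y : ℝ => f (σ + y * I)) := by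
    intro σ h1 h2
    have hi : Integrable (fun y : ℝ => B * (1 + ‖y‖) ^ (-(39/20) : ℝ)) :=
      (integrable_one_add_norm (by norm_num)).const_mul B
    refine hi.mono' ?_ ?_
    · apply Continuous.aestronglyMeasurable
      apply hf.continuousOn.comp_continuous (by fun_prop)
      intro y; simp; linarith
    · filter_upwards with y
      have := hB (σ + y * I) (by simpa using h1) (by simpa using h2)
      simpa using this
  have htop : Tendsto (fun T : ℝ => T) atTop atTop := tendsto_id
  have hbot : Tendsto (fun T : ℝ => -T) atTop atBot := tendsto_neg_atTop_atBot
  have l2 := intervalIntegral_tendsto_integral (hint 2 (by norm_num) le_rfl) hbot htop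
  have l1 := intervalIntegral_tendsto_integral (hint 0.55 le_rfl (by norm_num)) hbot htop
  have hz : Tendsto (fun T : ℝ => B * (1 + |T|) ^ (-(39/20) : ℝ) * (2 - 0.55)) atTop (𝓝 0) := by
    have h1 : Tendsto (fun T : ℝ => 1 + |T|) atTop atTop :=
      tendsto_atTop_add_const_left _ _ tendsto_abs_atTop_atTop
    have h2 := (tendsto_rpow_neg_atTop (show (0:ℝ) < 39/20 by norm_num)).comp h1
    have := (h2.const_mul B).mul_const (2 - 0.55)
    simpa using this
  have hbd : ∀ T T' : ℝ, |T'| = |T| → ‖∫ x in (0.55:ℝ)..2, f (x + T' * I)‖ ≤ B * (1 + |T|) ^ (-(39/20) : ℝ) * (2 - 0.55) := by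
    intro T T' hT
    have := intervalIntegral.norm_integral_le_of_norm_le_const (a := 0.55) (b := 2)
      (f := fun x : ℝ => f (x + T' * I)) (C := B * (1 + |T|) ^ (-(39/20) : ℝ)) (fun x hx => by
        rw [uIoc_of_le (by norm_num)] at hx
        have := hB (x + T' * I) (by simpa using hx.1.le) (by simpa using hx.2)
        simpa [hT] using this)
    rwa [abs_of_pos (by norm_num : (0:ℝ) < 2 - 0.55)] at this
  have t1 : Tendsto (fun T : ℝ => ∫ x in (0.55:ℝ)..2, f (x + (T:ℝ) * I)) atTop (𝓝 0) :=
    squeeze_zero_norm (fun T => hbd T T rfl) hz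
  have t2 : Tendsto (fun T : ℝ => ∫ x in (0.55:ℝ)..2, f (x + ((-T:ℝ):ℂ) * I)) atTop (𝓝 0) :=
    squeeze_zero_norm (fun T => hbd T (-T) (abs_neg T)) hz
  have hrect : ∀ T : ℝ, ((∫ x in (0.55:ℝ)..2, f (x + ((-T:ℝ):ℂ) * I)) - ∫ x in (0.55:ℝ)..2, f (x + (T:ℝ) * I))
      + I • (∫ y in (-T)..T, f ((2:ℝ) + y * I)) - I • ∫ y in (-T)..T, f ((0.55:ℝ) + y * I) = 0 := by
    intro T
    have := Complex.integral_boundary_rect_eq_zero_of_differentiableOn f ⟨0.55, -T⟩ ⟨2, T⟩ (by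
      apply hf.mono
      intro s hs
      rw [mem_reProdIm] at hs
      have := hs.1
      simp only [uIcc_of_le (show (0.55:ℝ) ≤ 2 by norm_num)] at this
      have h1 := this.1
      simp only [mem_ofPred_eq]
      norm_num at h1
      linarith)
    exact this
  have lim := ((t2.sub t1).add (l2.const_smul I)).sub (l1.const_smul I)
  have lim0 := tendsto_nhds_unique lim (by simp only [hrect]; exact tendsto_const_nhds)
  simp only [sub_zero, zero_add, ← smul_sub, smul_eq_zero, I_ne_zero, false_or] at lim0
  exact sub_eq_zero.mp lim0

lemma gG_eq (hRH : RiemannHypothesis) {x : ℝ} (hx : 1 < x) :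
    (gG x : ℂ) = (1 / (2 * Real.pi) : ℝ) • ∫ y : ℝ, (x:ℂ) ^ (((0.55:ℝ) + y * I : ℂ) + 1) * zQ ((0.55:ℝ) + y * I) := by
  rw [inversion hRH hx]
  congr 1
  obtain ⟨K, hK, h⟩ := zQ_bound hRH
  have hx0 : (0:ℝ) < x := by linarith
  have := shift (f := fun s => (x:ℂ) ^ (s + 1) * zQ s) (B := x ^ (3:ℝ) * K) (by
    apply DifferentiableOn.mul _ (zQ_diff hRH)
    intro s hs
    apply DifferentiableAt.differentiableWithinAt
    have : (x:ℂ) ≠ 0 := by exact_mod_cast hx0.ne'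
    exact DifferentiableAt.const_cpow (by fun_prop) (Or.inl this)) (by
    intro s h1 h2
    rw [norm_mul, norm_cpow_eq_rpow_re_of_pos hx0, mul_assoc]
    gcongr
    · exact hx.le
    · simp; linarith
    · exact h s h1 h2)
  simpa using this

lemma cpow_diff {a b : ℝ} (ha : 1 < a) (hab : a ≤ b) (s : ℂ) (hs : s.re = 0.55) :
    ‖(b:ℂ) ^ (s+1) - (a:ℂ) ^ (s+1)‖ ≤ 2 * ‖s+1‖ ^ (0.9:ℝ) * (b-a) ^ (0.9:ℝ) * b ^ (0.65:ℝ) := by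
  have hb0 : 0 < b := by linarith
  have hs1 : s + 1 ≠ 0 := by
    intro h; have := congrArg re h; simp [hs] at this; norm_num at this
  have A : ‖(b:ℂ) ^ (s+1) - (a:ℂ) ^ (s+1)‖ ≤ ‖s+1‖ * b ^ (0.55:ℝ) * (b - a) := by
    have := (convex_Icc a b).norm_image_sub_le_of_norm_hasDerivWithin_le
      (f := fun u : ℝ => (u:ℂ) ^ (s+1)) (f' := fun u : ℝ => (s+1) * (u:ℂ) ^ s) (C := ‖s+1‖ * b ^ (0.55:ℝ))
      (x := a) (y := b) (fun u hu => by
        have hu0 : u ≠ 0 := by linarith [hu.1]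
        have h1 := hasDerivAt_ofReal_cpow_const' (x := u) hu0 (r := s) (by
          intro h; rw [h] at hs1; simp at hs1)
        have h2 := h1.const_mul (s+1)
        have e : (fun y : ℝ => (s+1) * ((y:ℂ) ^ (s+1) / (s+1))) = fun y : ℝ => (y:ℂ) ^ (s+1) := by
          ext y; field_simp
        rw [e] at h2
        exact h2.hasDerivWithinAt) (fun u hu => by
        have hu0 : 0 < u := by linarith [hu.1]
        rw [norm_mul, norm_cpow_eq_rpow_re_of_pos hu0, hs]
        gcongr
        exact hu.2) (left_mem_Icc.mpr hab) (right_mem_Icc.mpr hab)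
    rwa [Real.norm_of_nonneg (by linarith : 0 ≤ b - a)] at this
  have B : ‖(b:ℂ) ^ (s+1) - (a:ℂ) ^ (s+1)‖ ≤ 2 * b ^ (1.55:ℝ) := by
    refine (norm_sub_le _ _).trans ?_
    rw [norm_cpow_eq_rpow_re_of_pos hb0, norm_cpow_eq_rpow_re_of_pos (by linarith), add_re, hs, one_re]
    have : a ^ (0.55 + 1:ℝ) ≤ b ^ (0.55 + 1:ℝ) := by gcongr
    norm_num at this ⊢
    linarith
  set D := ‖(b:ℂ) ^ (s+1) - (a:ℂ) ^ (s+1)‖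
  have hD : 0 ≤ D := norm_nonneg _
  have hba : 0 ≤ b - a := by linarith
  have e1 : D = D ^ (0.9:ℝ) * D ^ (0.1:ℝ) := by
    rw [← Real.rpow_add_of_nonneg hD (by norm_num) (by norm_num)]; norm_num
  have e2 : (2:ℝ) ^ (0.1:ℝ) ≤ 2 := by
    calc (2:ℝ) ^ (0.1:ℝ) ≤ 2 ^ (1:ℝ) := by gcongr <;> norm_num
      _ = 2 := Real.rpow_one 2
  calc D = D ^ (0.9:ℝ) * D ^ (0.1:ℝ) := e1
    _ ≤ (‖s+1‖ * b ^ (0.55:ℝ) * (b - a)) ^ (0.9:ℝ) * (2 * b ^ (1.55:ℝ)) ^ (0.1:ℝ) := by gcongr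
    _ = 2 ^ (0.1:ℝ) * ‖s+1‖ ^ (0.9:ℝ) * (b-a) ^ (0.9:ℝ) * b ^ (0.65:ℝ) := by
      rw [Real.mul_rpow (by positivity) hba, Real.mul_rpow (by positivity) (by positivity),
        Real.mul_rpow (by positivity) (by positivity), ← Real.rpow_mul hb0.le, ← Real.rpow_mul hb0.le,
        show (0.65:ℝ) = 0.55 * 0.9 + 1.55 * 0.1 by norm_num, Real.rpow_add hb0]
      ring
    _ ≤ _ := by gcongr

lemma gG_diff (hRH : RiemannHypothesis) : ∃ K : ℝ, 0 < K ∧ ∀ a b : ℝ, 1 < a → a ≤ b →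
    |gG b - gG a| ≤ K * (b-a) ^ (0.9:ℝ) * b ^ (0.65:ℝ) := by
  obtain ⟨K, hK, h⟩ := zQ_bound hRH
  have hi : Integrable (fun y : ℝ => (1 + ‖y‖) ^ (-(21/20) : ℝ)) := integrable_one_add_norm (by norm_num)
  set W := ∫ y : ℝ, (1 + ‖y‖) ^ (-(21/20) : ℝ) with hW
  have hW0 : 0 ≤ W := integral_nonneg fun y => by positivity
  refine ⟨(1 / (2 * Real.pi)) * (6 * K) * W + 1, by positivity, fun a b ha hab => ?_⟩
  have hba : 0 ≤ b - a := by linarith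
  have hb0 : 0 < b := by linarith
  have hint : ∀ x : ℝ, 1 < x → Integrable (fun y : ℝ => (x:ℂ) ^ (((0.55:ℝ) + y * I : ℂ) + 1) * zQ ((0.55:ℝ) + y * I)) := by
    intro x hx
    have hx0 : 0 < x := by linarith
    refine ((vert_int hRH (σ := 0.55) le_rfl (by norm_num)).norm.const_mul (x ^ (1.55:ℝ))).mono' ?_ ?_
    · apply Continuous.aestronglyMeasurable
      apply Continuous.mul
      · apply Continuous.const_cpow (by fun_prop)
        left; exact_mod_cast hx0.ne'
      · apply (zQ_diff hRH).continuousOn.comp_continuous (by fun_prop)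
        intro y; simp; norm_num
    · filter_upwards with y
      rw [norm_mul, norm_cpow_eq_rpow_re_of_pos hx0]
      apply le_of_eq
      congr 2
      simp; norm_num
  have h1 : ((gG b - gG a : ℝ) : ℂ) = (1 / (2 * Real.pi) : ℝ) • ∫ y : ℝ,
      ((b:ℂ) ^ (((0.55:ℝ) + y * I : ℂ) + 1) - (a:ℂ) ^ (((0.55:ℝ) + y * I : ℂ) + 1)) * zQ ((0.55:ℝ) + y * I) := by
    rw [ofReal_sub, gG_eq hRH ha, gG_eq hRH (ha.trans_le hab), ← smul_sub,
      ← integral_sub (hint b (ha.trans_le hab)) (hint a ha)]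
    simp_rw [sub_mul]
  have h2 : ‖∫ y : ℝ, ((b:ℂ) ^ (((0.55:ℝ) + y * I : ℂ) + 1) - (a:ℂ) ^ (((0.55:ℝ) + y * I : ℂ) + 1)) * zQ ((0.55:ℝ) + y * I)‖
      ≤ ∫ y : ℝ, (6 * K * (b-a) ^ (0.9:ℝ) * b ^ (0.65:ℝ)) * (1 + ‖y‖) ^ (-(21/20) : ℝ) := by
    apply norm_integral_le_of_norm_le (hi.const_mul _)
    filter_upwards with y
    set s : ℂ := (0.55:ℝ) + y * I with hs
    have hre : s.re = 0.55 := by simp [hs]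
    have him : s.im = y := by simp [hs]
    have q1 := cpow_diff ha hab s hre
    have q2 := h s (by rw [hre]) (by rw [hre]; norm_num)
    rw [him] at q2
    have hp : (0:ℝ) < 1 + |y| := by positivity
    have q3 : ‖s + 1‖ ≤ 3 * (1 + |y|) := by
      have : s + 1 = ((1.55:ℝ):ℂ) + y * I := by rw [hs]; push_cast; ring
      rw [this]
      refine (norm_add_le _ _).trans ?_
      rw [norm_real, norm_mul, norm_real, norm_I, mul_one, Real.norm_eq_abs, Real.norm_eq_abs,
        abs_of_pos (by norm_num : (0:ℝ) < 1.55)]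
      linarith [abs_nonneg y]
    have q4 : ‖s + 1‖ ^ (0.9:ℝ) ≤ 3 * (1 + |y|) ^ (0.9:ℝ) := by
      calc _ ≤ (3 * (1 + |y|)) ^ (0.9:ℝ) := by gcongr
        _ = 3 ^ (0.9:ℝ) * (1 + |y|) ^ (0.9:ℝ) := Real.mul_rpow (by norm_num) hp.le
        _ ≤ 3 ^ (1:ℝ) * (1 + |y|) ^ (0.9:ℝ) := by gcongr <;> norm_num
        _ = _ := by rw [Real.rpow_one]
    rw [norm_mul, Real.norm_eq_abs]
    calc _ ≤ (2 * ‖s+1‖ ^ (0.9:ℝ) * (b-a) ^ (0.9:ℝ) * b ^ (0.65:ℝ)) * (K * (1 + |y|) ^ (-(39/20) : ℝ)) := by gcongr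
      _ ≤ (2 * (3 * (1 + |y|) ^ (0.9:ℝ)) * (b-a) ^ (0.9:ℝ) * b ^ (0.65:ℝ)) * (K * (1 + |y|) ^ (-(39/20) : ℝ)) := by gcongr
      _ = _ := by
        rw [show (-(21/20) : ℝ) = 0.9 + (-(39/20)) by norm_num, Real.rpow_add hp]; ring
  rw [integral_const_mul, ← hW] at h2
  have h3 : |gG b - gG a| = ‖((gG b - gG a : ℝ) : ℂ)‖ := by rw [norm_real, Real.norm_eq_abs]
  rw [h3, h1, norm_smul, Real.norm_of_nonneg (by positivity)]
  have hX : 0 ≤ (b-a) ^ (0.9:ℝ) * b ^ (0.65:ℝ) := by positivity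
  calc _ ≤ (1 / (2 * Real.pi)) * (6 * K * (b-a) ^ (0.9:ℝ) * b ^ (0.65:ℝ) * W) := by gcongr
    _ ≤ _ := by nlinarith

lemma gG_lo {a b : ℝ} (hab : a ≤ b) :
    (b - a) * (Chebyshev.psi a - b + 1) ≤ gG b - gG a ∧
    gG b - gG a ≤ (b - a) * (Chebyshev.psi b - a + 1) := by
  have h : gG b - gG a = ∫ v in a..b, gPsi v :=
    intervalIntegral.integral_interval_sub_left (gPsi_ii _ _) (gPsi_ii _ _)
  rw [h]
  constructor
  · have := intervalIntegral.integral_mono_on hab (f := fun _ => Chebyshev.psi a - b + 1)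
      (by simp) (gPsi_ii a b) (fun v hv => by
        have := Chebyshev.psi_mono hv.1
        unfold gPsi; linarith [hv.2])
    rw [intervalIntegral.integral_const, smul_eq_mul] at this; exact this
  · have := intervalIntegral.integral_mono_on hab (g := fun _ => Chebyshev.psi b - a + 1)
      (gPsi_ii a b) (by simp)  (fun v hv => by
        have := Chebyshev.psi_mono hv.2
        unfold gPsi; linarith [hv.1])
    rw [intervalIntegral.integral_const, smul_eq_mul] at this; exact this

lemma psi_asymp (hRH : RiemannHypothesis) : ∃ K : ℝ, 0 < K ∧ ∀ x : ℝ, 1 ≤ x →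
    |Chebyshev.psi x - x| ≤ K * x ^ (0.6:ℝ) := by
  obtain ⟨K, hK, hd⟩ := gG_diff hRH
  refine ⟨2 * K + 100, by linarith, fun x hx => ?_⟩
  have hp1 : 1 ≤ x ^ (0.6:ℝ) := Real.one_le_rpow hx (by norm_num)
  by_cases h8 : x < 8
  · have := gPsi_bd x hx
    unfold gPsi at this
    rw [abs_le] at this ⊢
    constructor <;> nlinarith
  push Not at h8
  have hx0 : 0 < x := by linarith
  set h := x ^ (0.6:ℝ) with hh
  have hh0 : 0 < h := by linarith
  have hhx : 2 * h ≤ x := by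
    have e : x = x ^ (0.4:ℝ) * h := by
      rw [hh, ← Real.rpow_add hx0]; norm_num
    have : (2:ℝ) ≤ x ^ (0.4:ℝ) := by
      calc (2:ℝ) = 2 ^ (1:ℝ) := by simp
        _ ≤ 2 ^ ((3:ℝ) * 0.4) := Real.rpow_le_rpow_of_exponent_le (by norm_num) (by norm_num)
        _ = 8 ^ (0.4:ℝ) := by rw [Real.rpow_mul (by norm_num)]; norm_num
        _ ≤ _ := Real.rpow_le_rpow (by norm_num) h8 (by norm_num)
    nlinarith
  have key : ∀ b, 0 < b → b ≤ 2 * x → K * h ^ (0.9:ℝ) * b ^ (0.65:ℝ) ≤ h * (2 * K * h) := by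
    intro b hb0 hb
    have e1 : b ^ (0.65:ℝ) ≤ 2 * x ^ (0.65:ℝ) := by
      calc b ^ (0.65:ℝ) ≤ (2 * x) ^ (0.65:ℝ) := Real.rpow_le_rpow hb0.le hb (by norm_num)
        _ = 2 ^ (0.65:ℝ) * x ^ (0.65:ℝ) := Real.mul_rpow (by norm_num) hx0.le
        _ ≤ 2 ^ (1:ℝ) * x ^ (0.65:ℝ) := by
          gcongr <;> norm_num
        _ = _ := by simp
    have e2 : h ^ (0.9:ℝ) * x ^ (0.65:ℝ) ≤ h * h := by
      rw [hh, ← Real.rpow_mul hx0.le, ← Real.rpow_add hx0, ← Real.rpow_add hx0]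
      exact Real.rpow_le_rpow_of_exponent_le hx (by norm_num)
    calc K * h ^ (0.9:ℝ) * b ^ (0.65:ℝ) ≤ K * h ^ (0.9:ℝ) * (2 * x ^ (0.65:ℝ)) := by gcongr
      _ = 2 * K * (h ^ (0.9:ℝ) * x ^ (0.65:ℝ)) := by ring
      _ ≤ 2 * K * (h * h) := by gcongr
      _ = _ := by ring
  have u1 := hd x (x + h) (by linarith) (by linarith)
  have u2 := hd (x - h) x (by linarith) (by linarith)
  have v1 := (gG_lo (a := x) (b := x + h) (by linarith)).1
  have v2 := (gG_lo (a := x - h) (b := x) (by linarith)).2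
  rw [show x + h - x = h by ring] at u1 v1
  rw [show x - (x - h) = h by ring] at u2 v2
  have u1' := (abs_le.1 u1).2.trans (key _ (by linarith) (by linarith))
  have u2' := (abs_le.1 (u2.trans (key _ (by linarith) (by linarith)))).1
  have w1 : Chebyshev.psi x - (x + h) + 1 ≤ 2 * K * h := le_of_mul_le_mul_left (v1.trans u1') hh0
  have w2 : -(2 * K * h) ≤ Chebyshev.psi x - (x - h) + 1 :=
    le_of_mul_le_mul_left (by linarith [u2'.trans v2]) hh0
  rw [abs_le]
  constructor <;> nlinarith

lemma theta_asymp (hRH : RiemannHypothesis) : ∃ K : ℝ, 0 < K ∧ ∀ x : ℝ, 1 ≤ x →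
    |Chebyshev.theta x - x| ≤ K * x ^ (0.6:ℝ) := by
  obtain ⟨K, hK, hd⟩ := psi_asymp hRH
  obtain ⟨C, hC⟩ := Chebyshev.psi_sub_theta_le_mul_sqrt
  refine ⟨K + |C|, by positivity, fun x hx => ?_⟩
  have h1 := hd x hx
  have h2 := hC x
  have h3 := Chebyshev.theta_le_psi x
  have h4 : √x ≤ x ^ (0.6:ℝ) := by
    rw [Real.sqrt_eq_rpow]
    exact Real.rpow_le_rpow_of_exponent_le hx (by norm_num)
  have h5 : C * √x ≤ |C| * x ^ (0.6:ℝ) :=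
    mul_le_mul (le_abs_self C) h4 (Real.sqrt_nonneg x) (abs_nonneg C)
  have h6 : 0 ≤ |C| * x ^ (0.6:ℝ) := by positivity
  rw [abs_le] at h1 ⊢
  constructor <;> nlinarith

lemma young_aux {α β γ C c : ℝ} (h1 : α < β) (h2 : β < γ) (hC : 0 < C) (hc : 0 < c) :
    ∃ B : ℝ, 0 < B ∧ ∀ x : ℝ, 1 ≤ x → C * x ^ β ≤ B * x ^ α + c * x ^ γ := by
  set X : ℝ := (C / c) ^ (1 / (γ - β)) with hX
  have hX0 : 0 < X := Real.rpow_pos_of_pos (by positivity) _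
  refine ⟨C * X ^ (β - α), by positivity, fun x hx => ?_⟩
  have hx0 : 0 < x := by linarith
  have ea : x ^ β = x ^ (β - α) * x ^ α := by rw [← Real.rpow_add hx0]; ring_nf
  have eg : x ^ γ = x ^ (γ - β) * x ^ β := by rw [← Real.rpow_add hx0]; ring_nf
  have pa : 0 < x ^ α := Real.rpow_pos_of_pos hx0 _
  have pb : 0 < x ^ β := Real.rpow_pos_of_pos hx0 _
  have pg : 0 < x ^ γ := Real.rpow_pos_of_pos hx0 _
  rcases le_total x X with h | h
  · have : x ^ (β - α) ≤ X ^ (β - α) := Real.rpow_le_rpow hx0.le h (by linarith)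
    have : C * x ^ β ≤ C * X ^ (β - α) * x ^ α := by
      rw [ea, mul_assoc]; gcongr
    nlinarith
  · have : C / c ≤ x ^ (γ - β) := by
      calc C / c = X ^ (γ - β) := by
            rw [hX, ← Real.rpow_mul (by positivity), one_div_mul_cancel (by linarith), Real.rpow_one]
        _ ≤ _ := Real.rpow_le_rpow hX0.le h (by linarith)
    have : C * x ^ β ≤ c * x ^ γ := by
      rw [eg, ← mul_assoc]
      rw [div_le_iff₀ hc] at this
      gcongr
      linarith
    have : 0 < C * X ^ (β - α) * x ^ α := by positivity
    linarith

set_option maxHeartbeats 1000000 in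
lemma anal_aux (C : ℝ) (hC : 0 < C) : ∃ B : ℝ, 0 < B ∧ ∀ r x J : ℝ, 1 < r →
    2 * Real.log r < Real.log x → 2657 ≤ √x / r →
    J ≤ (√(x * r) - √x / r + 1) * (x / (√x / r - 1)) ^ (0.6:ℝ) →
    J ≤ 2.5 * x ^ (0.6:ℝ) * √(x * r) ^ (0.4:ℝ) →
    C * J ≤ B * x ^ ((3:ℝ)/4) * r ^ ((1:ℝ)/2) +
      3 * (x * (1 - 1 / r) * Real.log r) * Real.log r / (Real.log x) ^ 3 := by
  set c0 : ℝ := 1 / 150 ^ 3 with hc0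
  obtain ⟨B1, hB1, H1⟩ := young_aux (α := 3/4) (β := 0.84) (γ := 0.98) (C := 2.5 * C) (c := 0.7 * c0)
    (by norm_num) (by norm_num) (by positivity) (by positivity)
  obtain ⟨B2, hB2, H2⟩ := young_aux (α := 3/4) (β := 0.8) (γ := 0.88) (C := 8 * C) (c := 3/8 * c0)
    (by norm_num) (by norm_num) (by positivity) (by positivity)
  refine ⟨B1 + B2 + 12 * C + 2.5 * C, by positivity, fun r x J hr hL hP hJ1 hJ2 => ?_⟩
  have hr0 : 0 < r := by linarith
  have hm : 2657 * r ≤ √x := by rwa [le_div_iff₀ hr0] at hP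
  have hm1 : 2657 < √x := by nlinarith
  have hx0 : 0 < x := Real.sqrt_pos.1 (by linarith)
  have hxm : √x * √x = x := Real.mul_self_sqrt hx0.le
  have hx1 : 1 ≤ x := by nlinarith
  have hR0 : 0 < Real.log r := Real.log_pos hr
  have hL0 : 0 < Real.log x := by linarith
  have hs1 : 1 ≤ r ^ ((1:ℝ)/2) := Real.one_le_rpow hr.le (by norm_num)
  have h1r : 0 < 1 - 1 / r := by
    have : 1 / r < 1 := by rw [div_lt_one hr0]; exact hr
    linarith
  have p34 : 0 < x ^ ((3:ℝ)/4) := Real.rpow_pos_of_pos hx0 _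
  have hL3 : c0 * x ^ (0.98:ℝ) ≤ x / Real.log x ^ 3 := by
    have h := Real.log_le_rpow_div (ε := 1/150) hx0.le (by norm_num)
    have h' : Real.log x ^ 3 ≤ 150 ^ 3 * x ^ (0.02:ℝ) := by
      calc Real.log x ^ 3 ≤ (x ^ ((1:ℝ)/150) / (1/150)) ^ 3 := by gcongr
        _ = 150 ^ 3 * (x ^ ((1:ℝ)/150)) ^ 3 := by ring
        _ = 150 ^ 3 * x ^ (0.02:ℝ) := by
          rw [← Real.rpow_natCast (x ^ _), ← Real.rpow_mul hx0.le]; norm_num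
    rw [le_div_iff₀ (by positivity)]
    calc c0 * x ^ (0.98:ℝ) * Real.log x ^ 3 ≤ c0 * x ^ (0.98:ℝ) * (150 ^ 3 * x ^ (0.02:ℝ)) := by
          gcongr
      _ = x ^ (0.98:ℝ) * x ^ (0.02:ℝ) := by rw [hc0]; ring
      _ = x := by rw [← Real.rpow_add hx0]; norm_num
  have hslack : 3 * (x * (1 - 1 / r) * Real.log r) * Real.log r / (Real.log x) ^ 3
      = 3 * (1 - 1 / r) * Real.log r ^ 2 * (x / Real.log x ^ 3) := by ring
  have hB : ∀ b, 0 < b → b ≤ B1 + B2 + 12 * C + 2.5 * C →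
      b * x ^ ((3:ℝ)/4) ≤ (B1 + B2 + 12 * C + 2.5 * C) * x ^ ((3:ℝ)/4) * r ^ ((1:ℝ)/2) := by
    intro b hb hb'
    calc b * x ^ ((3:ℝ)/4) ≤ (B1 + B2 + 12 * C + 2.5 * C) * x ^ ((3:ℝ)/4) * 1 := by
          rw [mul_one]; gcongr
      _ ≤ _ := by gcongr
  have pX : 0 < x / Real.log x ^ 3 := by positivity
  rw [hslack]
  by_cases h2 : r < 2
  · -- small r
    set δ := r - 1 with hδ
    have hδ0 : 0 < δ := by linarith
    have e1 : √(x * r) - √x / r + 1 ≤ 2 * δ * √x + 1 := by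
      rw [Real.sqrt_mul hx0.le]
      have : √r ≤ r := by
        rw [Real.sqrt_le_left (by linarith)]; nlinarith
      have h3 : 1 / r ≥ 1 - δ := by
        rw [ge_iff_le, le_div_iff₀ hr0]; nlinarith
      have : √x * √r ≤ √x * r := by gcongr
      have : √x * (1 - δ) ≤ √x * (1 / r) := by gcongr
      have : √x / r = √x * (1 / r) := by ring
      nlinarith
    have e2 : x / (√x / r - 1) ≤ 4 * √x := by
      have : √x / 4 ≤ √x / r - 1 := by
        have : √x / r ≥ √x / 2 := by gcongr
        linarith
      rw [div_le_iff₀ (by linarith)]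
      nlinarith
    have e3 : (x / (√x / r - 1)) ^ (0.6:ℝ) ≤ 4 * x ^ (0.3:ℝ) := by
      calc (x / (√x / r - 1)) ^ (0.6:ℝ) ≤ (4 * √x) ^ (0.6:ℝ) :=
            Real.rpow_le_rpow (div_nonneg hx0.le (by linarith)) e2 (by norm_num)
        _ = 4 ^ (0.6:ℝ) * √x ^ (0.6:ℝ) := Real.mul_rpow (by norm_num) (by positivity)
        _ ≤ 4 ^ (1:ℝ) * x ^ (0.3:ℝ) := by
          rw [Real.sqrt_eq_rpow, ← Real.rpow_mul hx0.le]
          norm_num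
          gcongr
          calc (4:ℝ) ^ ((3:ℝ)/5) ≤ 4 ^ (1:ℝ) := Real.rpow_le_rpow_of_exponent_le (by norm_num) (by norm_num)
            _ = 4 := by simp
        _ = _ := by simp
    have e4 : J ≤ 8 * δ * x ^ (0.8:ℝ) + 4 * x ^ ((3:ℝ)/4) := by
      calc J ≤ _ := hJ1
        _ ≤ (2 * δ * √x + 1) * (4 * x ^ (0.3:ℝ)) := by
          apply mul_le_mul e1 e3 (Real.rpow_nonneg (div_nonneg hx0.le (by linarith)) _) (by positivity)
        _ = 8 * δ * (√x * x ^ (0.3:ℝ)) + 4 * x ^ (0.3:ℝ) := by ring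
        _ = 8 * δ * x ^ (0.8:ℝ) + 4 * x ^ (0.3:ℝ) := by
          rw [Real.sqrt_eq_rpow, ← Real.rpow_add hx0]; norm_num
        _ ≤ _ := by gcongr <;> norm_num [hx1]
    have f1 : δ / 2 ≤ 1 - 1 / r := by
      have : 1 - 1 / r = δ / r := by rw [hδ]; field_simp
      rw [this]; gcongr
    have f2 : δ / 2 ≤ Real.log r := by
      have := Real.one_sub_inv_le_log_of_pos hr0
      rw [← one_div] at this; linarith
    have f3 : 3 / 8 * δ ^ 3 * (c0 * x ^ (0.98:ℝ)) ≤
        3 * (1 - 1 / r) * Real.log r ^ 2 * (x / Real.log x ^ 3) := by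
      calc 3 / 8 * δ ^ 3 * (c0 * x ^ (0.98:ℝ)) = 3 * (δ/2) * (δ/2) ^ 2 * (c0 * x ^ (0.98:ℝ)) := by ring
        _ ≤ _ := by gcongr
    have f4 : 8 * C * δ * x ^ (0.8:ℝ) ≤ (B2 + 8 * C) * x ^ ((3:ℝ)/4) +
        3 / 8 * δ ^ 3 * (c0 * x ^ (0.98:ℝ)) := by
      have hpos : 0 ≤ 3 / 8 * δ ^ 3 * (c0 * x ^ (0.98:ℝ)) := by positivity
      rcases le_total δ (x ^ (-0.05:ℝ)) with h | h
      · have : δ * x ^ (0.8:ℝ) ≤ x ^ ((3:ℝ)/4) := by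
          calc δ * x ^ (0.8:ℝ) ≤ x ^ (-0.05:ℝ) * x ^ (0.8:ℝ) := by gcongr
            _ = _ := by rw [← Real.rpow_add hx0]; norm_num
        have g5 : 8 * C * (δ * x ^ (0.8:ℝ)) ≤ 8 * C * x ^ ((3:ℝ)/4) := by gcongr
        have g6 : 0 < B2 * x ^ ((3:ℝ)/4) := by positivity
        linarith
      · have g1 : x ^ (0.88:ℝ) ≤ δ ^ 2 * x ^ (0.98:ℝ) := by
          calc x ^ (0.88:ℝ) = (x ^ (-0.05:ℝ)) ^ 2 * x ^ (0.98:ℝ) := by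
                rw [← Real.rpow_natCast (x ^ _), ← Real.rpow_mul hx0.le, ← Real.rpow_add hx0]; norm_num
            _ ≤ _ := by gcongr
        have g2 := mul_le_mul_of_nonneg_left (H2 x hx1) hδ0.le
        have g3 : δ * (3/8 * c0 * x ^ (0.88:ℝ)) ≤ δ * (3/8 * c0 * (δ ^ 2 * x ^ (0.98:ℝ))) := by
          gcongr
        have g4 : δ * (B2 * x ^ ((3:ℝ)/4)) ≤ 1 * (B2 * x ^ ((3:ℝ)/4)) := by gcongr; linarith
        have g5 : 0 < C * x ^ ((3:ℝ)/4) := by positivity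
        linarith
    have := hB (B2 + 12 * C) (by positivity) (by linarith)
    have := mul_le_mul_of_nonneg_left e4 hC.le
    linarith
  · push Not at h2
    have e1 : √(x * r) ^ (0.4:ℝ) = x ^ (0.2:ℝ) * r ^ (0.2:ℝ) := by
      rw [Real.sqrt_eq_rpow, ← Real.rpow_mul (by positivity), Real.mul_rpow hx0.le hr0.le]
      norm_num
    have e2 : J ≤ 2.5 * (x ^ (0.8:ℝ) * r ^ (0.2:ℝ)) := by
      rw [e1] at hJ2
      calc J ≤ _ := hJ2
        _ = 2.5 * ((x ^ (0.6:ℝ) * x ^ (0.2:ℝ)) * r ^ (0.2:ℝ)) := by ring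
        _ = _ := by rw [← Real.rpow_add hx0]; norm_num
    rcases le_total r (x ^ ((1:ℝ)/6)) with h | h
    · have e3 : x ^ (0.8:ℝ) * r ^ (0.2:ℝ) ≤ x ^ (0.84:ℝ) := by
        calc x ^ (0.8:ℝ) * r ^ (0.2:ℝ) ≤ x ^ (0.8:ℝ) * (x ^ ((1:ℝ)/6)) ^ (0.2:ℝ) := by gcongr
          _ ≤ _ := by
            rw [← Real.rpow_mul hx0.le, ← Real.rpow_add hx0]
            exact Real.rpow_le_rpow_of_exponent_le hx1 (by norm_num)
      have f1 : 1 / 2 ≤ 1 - 1 / r := by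
        have : 1 / r ≤ 1 / 2 := by gcongr
        linarith
      have f2 : 0.69 ≤ Real.log r := by
        have := Real.log_le_log (by norm_num) h2
        have := Real.log_two_gt_d9
        linarith
      have f3 : 0.7 * c0 * x ^ (0.98:ℝ) ≤ 3 * (1 - 1 / r) * Real.log r ^ 2 * (x / Real.log x ^ 3) := by
        calc 0.7 * c0 * x ^ (0.98:ℝ) = 0.7 * (c0 * x ^ (0.98:ℝ)) := by ring
          _ ≤ 3 * (1/2) * 0.69 ^ 2 * (x / Real.log x ^ 3) := by
            apply mul_le_mul (by norm_num) hL3 (by positivity) (by norm_num)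
          _ ≤ _ := by gcongr
      have := hB B1 (by positivity) (by linarith)
      have := H1 x hx1
      have := mul_le_mul_of_nonneg_left e2 hC.le
      have : 2.5 * C * (x ^ (0.8:ℝ) * r ^ (0.2:ℝ)) ≤ 2.5 * C * x ^ (0.84:ℝ) := by gcongr
      linarith
    · have e3 : x ^ (0.8:ℝ) * r ^ (0.2:ℝ) ≤ x ^ ((3:ℝ)/4) * r ^ ((1:ℝ)/2) := by
        calc x ^ (0.8:ℝ) * r ^ (0.2:ℝ) = x ^ ((3:ℝ)/4) * (x ^ ((1:ℝ)/6)) ^ (0.3:ℝ) * r ^ (0.2:ℝ) := by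
              rw [← Real.rpow_mul hx0.le, ← Real.rpow_add hx0]; norm_num
          _ ≤ x ^ ((3:ℝ)/4) * r ^ (0.3:ℝ) * r ^ (0.2:ℝ) := by gcongr
          _ = _ := by rw [mul_assoc, ← Real.rpow_add hr0]; norm_num
      have : 0 ≤ 3 * (1 - 1 / r) * Real.log r ^ 2 * (x / Real.log x ^ 3) := by positivity
      have : 2.5 * C * (x ^ ((3:ℝ)/4) * r ^ ((1:ℝ)/2)) ≤
        (B1 + B2 + 12 * C + 2.5 * C) * (x ^ ((3:ℝ)/4) * r ^ ((1:ℝ)/2)) := by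
        gcongr; linarith
      have := mul_le_mul_of_nonneg_left e2 hC.le
      have : 2.5 * C * (x ^ (0.8:ℝ) * r ^ (0.2:ℝ)) ≤ 2.5 * C * (x ^ ((3:ℝ)/4) * r ^ ((1:ℝ)/2)) := by gcongr
      linarith

def SS (r x t u : ℝ) : Prop := t / r < u ∧ u < r * t ∧ x / r < t * u ∧ t * u ≤ x

noncomputable def va (r x t : ℝ) : ℝ := max (t / r) (x / (r * t))
noncomputable def vb (r x t : ℝ) : ℝ := min (r * t) (x / t)
noncomputable def vv (r x t : ℝ) : ℝ := max (vb r x t - va r x t) 0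
noncomputable def FF (x : ℝ) : Finset ℕ := (Finset.range (⌊x⌋₊ + 1)).filter Nat.Prime
open Classical in
noncomputable def TT (r x t : ℝ) : ℝ := ∑ q ∈ FF x, if SS r x t q then Real.log q else 0

lemma SS_symm {r x t u : ℝ} (hr : 0 < r) : SS r x t u ↔ SS r x u t := by
  unfold SS
  rw [div_lt_iff₀ hr, div_lt_iff₀ hr (b := u), mul_comm t u, mul_comm u r, mul_comm r t]
  tauto

lemma SS_sub {r x t u : ℝ} (hr : 0 < r) (ht : 0 < t) (h : SS r x t u) :
    va r x t < u ∧ u ≤ vb r x t := by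
  obtain ⟨h1, h2, h3, h4⟩ := h
  unfold va vb
  refine ⟨max_lt h1 ?_, le_min h2.le ?_⟩
  · rw [div_lt_iff₀ (by positivity)]; rw [div_lt_iff₀ hr] at h3; linarith
  · rw [le_div_iff₀ ht]; linarith

lemma SS_of {r x t u : ℝ} (hr : 0 < r) (ht : 0 < t) (h1 : va r x t < u) (h2 : u < vb r x t) :
    SS r x t u := by
  unfold va at h1; unfold vb at h2
  rw [max_lt_iff] at h1; rw [lt_min_iff] at h2
  refine ⟨h1.1, h2.1, ?_, ?_⟩
  · have := h1.2
    rw [div_lt_iff₀ (by positivity)] at this; rw [div_lt_iff₀ hr]; linarith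
  · have := h2.2
    rw [lt_div_iff₀ ht] at this; linarith

lemma SS_rng {r x t u : ℝ} (hr : 0 < r) (hx : 0 < x) (ht : 0 < t) (h : SS r x t u) :
    √x / r < t ∧ t < √(x * r) := by
  obtain ⟨h1, h2, h3, h4⟩ := h
  constructor
  · rw [div_lt_iff₀ hr, Real.sqrt_lt hx.le (by positivity)]
    rw [div_lt_iff₀ hr] at h3
    have : t * u * r < t * (r * t) * r := by gcongr
    nlinarith
  · apply Real.lt_sqrt_of_sq_lt
    rw [div_lt_iff₀ hr] at h1
    have : t * t < t * (u * r) := by gcongr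
    nlinarith

lemma vv_vol {r x t : ℝ} (hr : 0 < r) (ht : 0 < t) :
    volume.real {u | SS r x t u} = vv r x t := by
  have h1 : {u | SS r x t u} ⊆ Ioc (va r x t) (vb r x t) := fun u hu => SS_sub hr ht hu
  have h2 : Ioo (va r x t) (vb r x t) ⊆ {u | SS r x t u} := fun u hu => SS_of hr ht hu.1 hu.2
  unfold vv
  apply le_antisymm
  · have := measureReal_mono (μ := volume) h1 (by simp)
    rwa [measureReal_def (s := Ioc _ _), Real.volume_Ioc, ENNReal.toReal_ofReal'] at this
  · have h3 : volume {u | SS r x t u} ≠ ⊤ := by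
      apply ne_top_of_le_ne_top _ (measure_mono h1); simp
    have := measureReal_mono (μ := volume) h2 h3
    rwa [measureReal_def (s := Ioo _ _), Real.volume_Ioo, ENNReal.toReal_ofReal'] at this

lemma theta_FF {x c : ℝ} (hc : 0 ≤ c) (hcx : c ≤ x) :
    Chebyshev.theta c = ∑ q ∈ FF x, if (q:ℝ) ≤ c then Real.log q else 0 := by
  rw [← Finset.sum_filter]
  unfold Chebyshev.theta FF
  apply Finset.sum_congr _ (fun _ _ => rfl)
  ext q
  simp only [Finset.mem_filter, Finset.mem_Ioc, Finset.mem_range, Nat.le_floor_iff hc, Order.lt_add_one_iff,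
    Nat.le_floor_iff (hc.trans hcx)]
  constructor
  · rintro ⟨⟨h1, h2⟩, h3⟩; exact ⟨⟨h2.trans hcx, h3⟩, h2⟩
  · rintro ⟨⟨h1, h2⟩, h3⟩; exact ⟨⟨h2.pos, h3⟩, h2⟩

lemma log_FF {x : ℝ} {q : ℕ} (_hq : q ∈ FF x) : 0 ≤ Real.log q := Real.log_natCast_nonneg q

lemma TT_vv_zero {r x t : ℝ} (hr : 0 < r) (ht : 0 < t) (h : ∀ u, ¬ SS r x t u) :
    TT r x t = 0 ∧ vv r x t = 0 := by
  constructor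
  · unfold TT; simp [h]
  · rw [← vv_vol hr ht]; simp [h]

lemma TT_vv {r x t K : ℝ} (hr : 1 < r) (hx : r ≤ √x) (ht : 1 < t) (hK0 : 0 < K)
    (hK : ∀ x : ℝ, 1 ≤ x → |Chebyshev.theta x - x| ≤ K * x ^ (0.6:ℝ)) :
    |TT r x t - vv r x t| ≤ 2 * K * (x / t) ^ (0.6:ℝ) := by
  have hr0 : 0 < r := by linarith
  have hx0 : 0 < x := Real.sqrt_pos.1 (by linarith)
  have ht0 : 0 < t := by linarith
  have hxm : √x * √x = x := Real.mul_self_sqrt hx0.le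
  by_cases hab : vb r x t ≤ va r x t
  · obtain ⟨h1, h2⟩ := TT_vv_zero (r := r) (x := x) hr0 ht0 (fun u hu => by
      have := SS_sub hr0 ht0 hu; linarith)
    rw [h1, h2]; simp; positivity
  push Not at hab
  have hvv : vv r x t = vb r x t - va r x t := max_eq_left (by linarith)
  have hbt : vb r x t ≤ x / t := min_le_right _ _
  have hbx : vb r x t ≤ x := hbt.trans (div_le_self hx0.le ht.le)
  have ha1 : 1 ≤ va r x t := by
    by_contra h
    push Not at h
    unfold va at h
    rw [max_lt_iff, div_lt_one hr0, div_lt_one (by positivity)] at h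
    have : √x * √x < r * r := by rw [hxm]; nlinarith
    nlinarith
  rw [hvv]
  have hub : ∀ c, 1 ≤ c → c ≤ vb r x t → K * c ^ (0.6:ℝ) ≤ K * (x / t) ^ (0.6:ℝ) := by
    intro c hc hc'
    have : c ≤ x / t := hc'.trans hbt
    gcongr
  have hKa := (hK _ ha1).trans (hub _ ha1 hab.le)
  have hKb := (hK _ (ha1.trans hab.le)).trans (hub _ (ha1.trans hab.le) le_rfl)
  rw [abs_le] at hKa hKb ⊢
  constructor
  · -- lower
    apply le_of_forall_pos_le_add
    intro ε hε
    set b' := max (va r x t) (vb r x t - ε) with hb'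
    have hb1 : va r x t ≤ b' := le_max_left _ _
    have hb2 : b' < vb r x t := max_lt hab (by linarith)
    have hb3 : vb r x t - ε ≤ b' := le_max_right _ _
    have hKc := (hK _ (ha1.trans hb1)).trans (hub _ (ha1.trans hb1) hb2.le)
    rw [abs_le] at hKc
    have : Chebyshev.theta b' - Chebyshev.theta (va r x t) ≤ TT r x t := by
      rw [theta_FF (x := x) (by linarith) (by linarith), theta_FF (x := x) (by linarith) (by linarith)]
      unfold TT
      rw [← Finset.sum_sub_distrib]
      apply Finset.sum_le_sum
      intro q hq
      have hl := log_FF hq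
      by_cases h1 : (q:ℝ) ≤ va r x t
      · rw [if_pos h1, if_pos (h1.trans hb1)]
        split_ifs <;> linarith
      · rw [if_neg h1]
        by_cases h2 : (q:ℝ) ≤ b'
        · rw [if_pos (SS_of hr0 ht0 (by linarith) (by linarith))]
          split_ifs <;> linarith
        · rw [if_neg h2]; split_ifs <;> linarith
    linarith
  · have : TT r x t ≤ Chebyshev.theta (vb r x t) - Chebyshev.theta (va r x t) := by
      rw [theta_FF (x := x) (by linarith) (by linarith), theta_FF (x := x) (by linarith) (by linarith)]
      unfold TT
      rw [← Finset.sum_sub_distrib]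
      apply Finset.sum_le_sum
      intro q hq
      have hl := log_FF hq
      by_cases h : SS r x t q
      · have := SS_sub hr0 ht0 h
        rw [if_pos h, if_pos this.2, if_neg (by linarith)]; linarith
      · rw [if_neg h]
        by_cases h1 : (q:ℝ) ≤ va r x t
        · rw [if_pos h1, if_pos (by linarith)]; linarith
        · rw [if_neg h1]; split_ifs <;> linarith
    linarith

lemma SS_meas (r x q : ℝ) : MeasurableSet {u | SS r x q u} := by
  unfold SS
  apply MeasurableSet.inter (measurableSet_lt measurable_const measurable_id)
  apply MeasurableSet.inter (measurableSet_lt measurable_id measurable_const)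
  apply MeasurableSet.inter (measurableSet_lt measurable_const (measurable_const.mul measurable_id))
  exact measurableSet_le (measurable_const.mul measurable_id) measurable_const

lemma TT_eq {r x : ℝ} (hr : 0 < r) : TT r x = fun t => ∑ q ∈ FF x,
    ({u | SS r x q u}.indicator (fun _ => Real.log q) t) := by
  ext t
  unfold TT
  apply Finset.sum_congr rfl
  intro q _
  classical
  rw [Set.indicator_apply]
  simp only [mem_ofPred_eq, SS_symm (t := t) hr]

lemma TT_int {r x : ℝ} (hr : 1 < r) (hx : r ≤ √x) :
    IntervalIntegrable (TT r x) volume (√x / r) √(x * r) ∧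
    ∫ t in (√x / r)..√(x * r), TT r x t = ∑ q ∈ FF x, Real.log q * vv r x q := by
  have hr0 : 0 < r := by linarith
  have hx0 : 0 < x := Real.sqrt_pos.1 (by linarith)
  have hPQ : √x / r ≤ √(x * r) := by
    rw [Real.sqrt_mul hx0.le, div_le_iff₀ hr0]
    have : 1 ≤ √r := Real.one_le_sqrt.2 hr.le
    have : 1 ≤ √r * r := by nlinarith
    rw [mul_assoc]; exact le_mul_of_one_le_right (by linarith) this
  have hi : ∀ q : ℕ, IntegrableOn ({u | SS r x q u}.indicator (fun _ => Real.log q))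
      (Ioc (√x / r) √(x * r)) := by
    intro q
    apply Integrable.indicator _ (SS_meas r x q)
    simp
  rw [TT_eq hr0]
  constructor
  · rw [intervalIntegrable_iff_integrableOn_Ioc_of_le hPQ]
    exact integrable_finsetSum _ (fun q _ => hi q)
  · rw [intervalIntegral.integral_of_le hPQ, integral_finsetSum _ (fun q _ => hi q)]
    apply Finset.sum_congr rfl
    intro q hq
    have hq0 : (0:ℝ) < q := by
      unfold FF at hq
      exact_mod_cast (Finset.mem_filter.1 hq).2.pos
    rw [integral_indicator (SS_meas r x q), Measure.restrict_restrict (SS_meas r x q),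
      inter_eq_left.2, setIntegral_const, vv_vol hr0 hq0, smul_eq_mul, mul_comm]
    intro u hu
    have hu0 : 0 < u := lt_trans (by positivity) hu.1
    have := SS_rng hr0 hx0 hu0 ((SS_symm hr0).1 hu)
    exact ⟨this.1, this.2.le⟩

lemma vv_cont (r x : ℝ) (hr : 0 < r) : ContinuousOn (vv r x) (Ioi 0) := by
  unfold vv va vb
  have h1 : ContinuousOn (fun t : ℝ => x / (r * t)) (Ioi 0) :=
    continuousOn_const.div (continuousOn_const.mul continuousOn_id)
      (fun t ht => (mul_pos hr ht).ne')
  have h2 : ContinuousOn (fun t : ℝ => x / t) (Ioi 0) :=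
    continuousOn_const.div continuousOn_id (fun t ht => ht.ne')
  exact ((((continuousOn_const.mul continuousOn_id).inf h2).sub
    ((continuousOn_id.div_const r).sup h1)).sup continuousOn_const)

lemma vv_ii (r x : ℝ) (hr : 0 < r) {a b : ℝ} (ha : 0 < a) (hb : 0 < b) :
    IntervalIntegrable (vv r x) volume a b := by
  apply ContinuousOn.intervalIntegrable
  apply (vv_cont r x hr).mono
  intro t ht
  exact lt_of_lt_of_le (lt_min ha hb) ht.1

lemma vv_int_aux {m s : ℝ} (hm : 0 < m) (hs : 1 < s) :
    ∫ t in (m / s ^ 2)..(m * s), vv (s ^ 2) (m ^ 2) t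
      = m ^ 2 * (1 - 1 / s ^ 2) * (2 * Real.log s) := by
  have hs0 : 0 < s := by linarith
  have p1 : 0 < m / s ^ 2 := by positivity
  have p2 : 0 < m / s := by positivity
  have p3 : 0 < m * s := by positivity
  have o1 : m / s ^ 2 ≤ m / s := by
    gcongr; nlinarith
  have o2 : m / s ≤ m := div_le_self hm.le hs.le
  have o3 : m ≤ m * s := le_mul_of_one_le_right hm.le hs.le
  have hr : 0 < s ^ 2 := by positivity
  rw [← intervalIntegral.integral_add_adjacent_intervals (vv_ii _ _ hr p1 p2) (vv_ii _ _ hr p2 p3),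
    ← intervalIntegral.integral_add_adjacent_intervals (vv_ii _ _ hr p2 hm) (vv_ii _ _ hr hm p3)]
  have ii : ∀ {a b : ℝ} (c d : ℝ), 0 < a → 0 < b →
      ∫ t in a..b, (c * t + d * t⁻¹) = c * ((b ^ 2 - a ^ 2) / 2) + d * Real.log (b / a) := by
    intro a b c d ha hb
    have hn : (0:ℝ) ∉ uIcc a b := fun h => absurd (lt_of_lt_of_le (lt_min ha hb) h.1) (lt_irrefl _)
    rw [intervalIntegral.integral_add, intervalIntegral.integral_const_mul,
      intervalIntegral.integral_const_mul, integral_id, integral_inv hn]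
    · exact (continuous_const.mul continuous_id).intervalIntegrable _ _
    · exact (intervalIntegral.intervalIntegrable_inv (fun t ht h0 => hn (h0 ▸ ht))
        continuousOn_id).const_mul d
  have e1 : ∫ t in (m / s ^ 2)..(m / s), vv (s ^ 2) (m ^ 2) t =
      ∫ t in (m / s ^ 2)..(m / s), (s ^ 2 * t + (-(m ^ 2 / s ^ 2)) * t⁻¹) := by
    apply intervalIntegral.integral_congr
    intro t ht
    rw [uIcc_of_le o1] at ht
    have ht0 : 0 < t := by linarith [ht.1]
    obtain ⟨h1, h2⟩ := ht
    rw [div_le_iff₀ (by positivity)] at h1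
    rw [le_div_iff₀ hs0] at h2
    have q1 : va (s ^ 2) (m ^ 2) t = m ^ 2 / (s ^ 2 * t) := by
      apply max_eq_right
      rw [div_le_div_iff₀ (by positivity) (by positivity)]
      have : t ≤ m := by nlinarith
      have : t * t ≤ m * m := by gcongr
      nlinarith
    have q2 : vb (s ^ 2) (m ^ 2) t = s ^ 2 * t := by
      apply min_eq_left
      rw [le_div_iff₀ ht0]
      have : (t * s) * (t * s) ≤ m * m := by gcongr
      nlinarith
    have q3 : m ^ 2 / (s ^ 2 * t) ≤ s ^ 2 * t := by
      rw [div_le_iff₀ (by positivity)]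
      have : m * m ≤ (t * s ^ 2) * (t * s ^ 2) := by gcongr
      nlinarith
    simp only
    unfold vv
    rw [q1, q2, max_eq_left (by linarith)]
    field_simp
    ring
  have e2 : ∫ t in (m / s)..m, vv (s ^ 2) (m ^ 2) t =
      ∫ t in (m / s)..m, (0 * t + (m ^ 2 - m ^ 2 / s ^ 2) * t⁻¹) := by
    apply intervalIntegral.integral_congr
    intro t ht
    rw [uIcc_of_le o2] at ht
    have ht0 : 0 < t := by linarith [ht.1]
    obtain ⟨h1, h2⟩ := ht
    rw [div_le_iff₀ (by positivity)] at h1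
    have q1 : va (s ^ 2) (m ^ 2) t = m ^ 2 / (s ^ 2 * t) := by
      apply max_eq_right
      rw [div_le_div_iff₀ (by positivity) (by positivity)]
      have : t * t ≤ m * m := by gcongr
      nlinarith
    have q2 : vb (s ^ 2) (m ^ 2) t = m ^ 2 / t := by
      apply min_eq_right
      rw [div_le_iff₀ ht0]
      have : m * m ≤ (t * s) * (t * s) := by gcongr
      nlinarith
    have q3 : m ^ 2 / (s ^ 2 * t) ≤ m ^ 2 / t := by
      gcongr; nlinarith
    simp only
    unfold vv
    rw [q1, q2, max_eq_left (by linarith)]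
    field_simp
    ring
  have e3 : ∫ t in m..(m * s), vv (s ^ 2) (m ^ 2) t =
      ∫ t in m..(m * s), ((-(1 / s ^ 2)) * t + m ^ 2 * t⁻¹) := by
    apply intervalIntegral.integral_congr
    intro t ht
    rw [uIcc_of_le o3] at ht
    have ht0 : 0 < t := by linarith [ht.1]
    obtain ⟨h1, h2⟩ := ht
    have hmt : m * m ≤ t * t := by gcongr
    have q1 : va (s ^ 2) (m ^ 2) t = t / s ^ 2 := by
      apply max_eq_left
      rw [div_le_div_iff₀ (by positivity) (by positivity)]
      nlinarith
    have q2 : vb (s ^ 2) (m ^ 2) t = m ^ 2 / t := by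
      apply min_eq_right
      rw [div_le_iff₀ ht0]
      nlinarith
    have q3 : t / s ^ 2 ≤ m ^ 2 / t := by
      rw [div_le_div_iff₀ (by positivity) (by positivity)]
      have : t * t ≤ (m * s) * (m * s) := by gcongr
      nlinarith
    simp only
    unfold vv
    rw [q1, q2, max_eq_left (by linarith)]
    field_simp
    ring
  have l1 : Real.log (m / s / (m / s ^ 2)) = Real.log s := by congr 1; field_simp
  have l2 : Real.log (m / (m / s)) = Real.log s := by congr 1; field_simp
  have l3 : Real.log (m * s / m) = Real.log s := by congr 1; field_simp
  rw [e1, e2, e3, ii _ _ p1 p2, ii _ _ p2 hm, ii _ _ hm p3, l1, l2, l3]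
  field_simp
  ring

lemma vv_int {r x : ℝ} (hr : 1 < r) (hx : 0 < x) :
    ∫ t in (√x / r)..√(x * r), vv r x t = x * (1 - 1 / r) * Real.log r := by
  have hr0 : 0 < r := by linarith
  have h := vv_int_aux (m := √x) (s := √r) (Real.sqrt_pos.2 hx) (Real.lt_sqrt_of_sq_lt (by linarith))
  rw [Real.sq_sqrt hr0.le, Real.sq_sqrt hx.le, Real.log_sqrt hr0.le, ← Real.sqrt_mul hx.le] at h
  rw [h]; ring

lemma WA {r x K : ℝ} (hr : 1 < r) (hP : 2657 ≤ √x / r) (hL : 1 ≤ Real.log x) (hK0 : 0 < K)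
    (hK : ∀ x : ℝ, 1 ≤ x → |Chebyshev.theta x - x| ≤ K * x ^ (0.6:ℝ)) :
    |∑ p ∈ FF x, Real.log p * TT r x p - x * (1 - 1 / r) * Real.log r| ≤
      4 * K * Real.log x * ∫ t in (√x / r - 1)..√(x * r), (x / t) ^ (0.6:ℝ) := by
  have hr0 : 0 < r := by linarith
  have hm : 2657 * r ≤ √x := by rwa [le_div_iff₀ hr0] at hP
  have hrx : r ≤ √x := by linarith
  have hx0 : 0 < x := Real.sqrt_pos.1 (by linarith)
  have hxm : √x * √x = x := Real.mul_self_sqrt hx0.le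
  set P := √x / r with hPd
  set Q := √(x * r) with hQd
  have hPQ : P ≤ Q := by
    rw [hPd, hQd, Real.sqrt_mul hx0.le, div_le_iff₀ hr0]
    have : 1 ≤ √r := Real.one_le_sqrt.2 hr.le
    have : 1 ≤ √r * r := by nlinarith
    rw [mul_assoc]; exact le_mul_of_one_le_right (by linarith) this
  have hQ0 : 0 < Q := by linarith
  have hQx : Q ≤ x := by
    rw [hQd, Real.sqrt_le_left hx0.le]
    have : r ≤ x := by nlinarith
    nlinarith
  set f : ℝ → ℝ := fun t => (x / t) ^ (0.6:ℝ) with hf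
  have hfc : ContinuousOn f (Ioi 0) := by
    apply ContinuousOn.rpow_const
    · exact continuousOn_const.div continuousOn_id (fun t ht => ht.ne')
    · intro t ht; right; norm_num
  have hfi : ∀ {a b : ℝ}, 0 < a → 0 < b → IntervalIntegrable f volume a b := by
    intro a b ha hb
    apply ContinuousOn.intervalIntegrable
    apply hfc.mono
    intro t ht
    exact lt_of_lt_of_le (lt_min ha hb) ht.1
  have hf0 : ∀ t, 0 < t → 0 ≤ f t := fun t ht => by positivity
  have hmono : ∀ {a b : ℝ}, P - 1 ≤ a → a ≤ b → b ≤ Q →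
      ∫ t in a..b, f t ≤ ∫ t in (P-1)..Q, f t := by
    intro a b h1 h2 h3
    apply intervalIntegral.integral_mono_interval h1 h2 h3
    · filter_upwards [ae_restrict_mem measurableSet_Ioc] with t ht
      exact hf0 t (by linarith [ht.1])
    · exact hfi (by linarith) hQ0
  obtain ⟨hTi, hT⟩ := TT_int hr hrx
  have hvi : IntervalIntegrable (vv r x) volume P Q := vv_ii r x hr0 (by linarith) hQ0
  have hv := vv_int hr hx0
  have key : ∑ p ∈ FF x, Real.log p * TT r x p - x * (1 - 1 / r) * Real.log r =
      ∑ p ∈ FF x, Real.log p * (TT r x p - vv r x p) + ∫ t in P..Q, (TT r x t - vv r x t) := by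
    rw [intervalIntegral.integral_sub hTi hvi, hT, hv]
    simp only [mul_sub, Finset.sum_sub_distrib]
    ring
  have b2 : |∫ t in P..Q, (TT r x t - vv r x t)| ≤ 2 * K * ∫ t in (P-1)..Q, f t := by
    calc |∫ t in P..Q, (TT r x t - vv r x t)| ≤ ∫ t in P..Q, 2 * K * f t := by
          rw [← Real.norm_eq_abs]
          apply intervalIntegral.norm_integral_le_of_norm_le hPQ
          · filter_upwards with t ht
            exact TT_vv hr hrx (by linarith [ht.1]) hK0 hK
          · exact (hfi (by linarith) hQ0).const_mul _
      _ = 2 * K * ∫ t in P..Q, f t := intervalIntegral.integral_const_mul _ _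
      _ ≤ _ := by gcongr; exact hmono (by linarith) hPQ le_rfl
  have b1 : |∑ p ∈ FF x, Real.log p * (TT r x p - vv r x p)| ≤
      2 * K * Real.log x * ∫ t in (P-1)..Q, f t := by
    have hfl : ⌊P⌋₊ ≤ ⌊Q⌋₊ := Nat.floor_mono hPQ
    have g1 : ∑ p ∈ FF x, |Real.log p * (TT r x p - vv r x p)| ≤
        ∑ n ∈ Finset.Ioc ⌊P⌋₊ ⌊Q⌋₊, 2 * K * Real.log x * f n := by
      rw [← Finset.sum_filter_of_ne (p := fun p : ℕ => P < p ∧ (p:ℝ) < Q)]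
      · apply (Finset.sum_le_sum (g := fun n : ℕ => 2 * K * Real.log x * f n) _).trans
        · apply Finset.sum_le_sum_of_subset_of_nonneg
          · intro p hp
            rw [Finset.mem_filter] at hp
            rw [Finset.mem_Ioc, Nat.floor_lt (by linarith), Nat.le_floor_iff hQ0.le]
            exact ⟨hp.2.1, hp.2.2.le⟩
          · intro n hn _
            rw [Finset.mem_Ioc] at hn
            have : (0:ℝ) < n := by exact_mod_cast (by omega : 0 < n)
            have := hf0 n this
            positivity
        · intro p hp
          rw [Finset.mem_filter] at hp
          have hp1 : (1:ℝ) < p := by linarith [hp.2.1]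
          rw [abs_mul, abs_of_nonneg (log_FF hp.1)]
          have h1 := TT_vv hr hrx hp1 hK0 hK
          have h2 : Real.log p ≤ Real.log x := Real.log_le_log (by linarith) (by linarith [hp.2.2])
          calc Real.log p * |TT r x p - vv r x p| ≤ Real.log x * (2 * K * f p) :=
                mul_le_mul h2 h1 (abs_nonneg _) (by linarith)
            _ = _ := by ring
      · intro p hp hne
        have hp0 : (0:ℝ) < p := by
          unfold FF at hp
          exact_mod_cast (Finset.mem_filter.1 hp).2.pos
        by_contra hc
        apply hne
        obtain ⟨h1, h2⟩ := TT_vv_zero (r := r) (x := x) hr0 hp0 (fun u hu => hc (SS_rng hr0 hx0 hp0 hu))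
        rw [h1, h2]; simp
    have hPf : P - 1 ≤ ⌊P⌋₊ := by linarith [Nat.lt_floor_add_one P]
    have hQf : (⌊Q⌋₊:ℝ) ≤ Q := Nat.floor_le hQ0.le
    have g2 : ∑ n ∈ Finset.Ioc ⌊P⌋₊ ⌊Q⌋₊, f n ≤ ∫ t in (⌊P⌋₊:ℝ)..(⌊Q⌋₊:ℝ), f t := by
      have := AntitoneOn.sum_le_integral_Ico (f := f) hfl (by
        intro a ha b hb hab
        have : 0 < a := by linarith [ha.1]
        have : 0 < b := by linarith
        simp only [hf]
        gcongr)
      rw [Finset.sum_Ico_add' (fun i : ℕ => f i)] at this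
      have hI : Finset.Ico (⌊P⌋₊ + 1) (⌊Q⌋₊ + 1) = Finset.Ioc ⌊P⌋₊ ⌊Q⌋₊ := by
        ext n; simp only [Finset.mem_Ico, Finset.mem_Ioc]; omega
      rw [hI] at this
      exact this
    calc |∑ p ∈ FF x, Real.log p * (TT r x p - vv r x p)| ≤ _ := Finset.abs_sum_le_sum_abs _ _
      _ ≤ _ := g1
      _ = 2 * K * Real.log x * ∑ n ∈ Finset.Ioc ⌊P⌋₊ ⌊Q⌋₊, f n := by rw [Finset.mul_sum]
      _ ≤ 2 * K * Real.log x * ∫ t in (P-1)..Q, f t := by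
        gcongr
        exact g2.trans (hmono hPf (by exact_mod_cast hfl) hQf)
  have hJ : 0 ≤ ∫ t in (P-1)..Q, f t := by
    apply intervalIntegral.integral_nonneg (by linarith)
    intro t ht
    exact hf0 t (by linarith [ht.1])
  rw [key]
  have h2 : 2 * K * ∫ t in (P-1)..Q, f t ≤ 2 * K * Real.log x * ∫ t in (P-1)..Q, f t := by
    have : 0 ≤ 2 * K * ∫ t in (P-1)..Q, f t := by positivity
    nlinarith
  have := (abs_add_le _ _).trans (add_le_add b1 b2)
  linarith

lemma J_bd {r x : ℝ} (hr : 1 < r) (hP : 2657 ≤ √x / r) :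
    (∫ t in (√x / r - 1)..√(x * r), (x / t) ^ (0.6:ℝ)) ≤
      (√(x * r) - √x / r + 1) * (x / (√x / r - 1)) ^ (0.6:ℝ) ∧
    (∫ t in (√x / r - 1)..√(x * r), (x / t) ^ (0.6:ℝ)) ≤
      2.5 * x ^ (0.6:ℝ) * √(x * r) ^ (0.4:ℝ) := by
  have hr0 : 0 < r := by linarith
  have hm : 2657 * r ≤ √x := by rwa [le_div_iff₀ hr0] at hP
  have hx0 : 0 < x := Real.sqrt_pos.1 (by linarith)
  set P := √x / r with hPd
  set Q := √(x * r) with hQd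
  have hPQ : P ≤ Q := by
    rw [hPd, hQd, Real.sqrt_mul hx0.le, div_le_iff₀ hr0]
    have : 1 ≤ √r := Real.one_le_sqrt.2 hr.le
    have : 1 ≤ √r * r := by nlinarith
    rw [mul_assoc]; exact le_mul_of_one_le_right (by linarith) this
  constructor
  · have := intervalIntegral.norm_integral_le_of_norm_le_const (a := P - 1) (b := Q)
      (f := fun t => (x / t) ^ (0.6:ℝ)) (C := (x / (P - 1)) ^ (0.6:ℝ)) (by
        intro t ht
        rw [uIoc_of_le (by linarith)] at ht
        have hp1 : 0 < P - 1 := by linarith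
        have ht0 : 0 < t := by linarith [ht.1]
        have hpt : P - 1 ≤ t := ht.1.le
        rw [Real.norm_eq_abs, abs_of_nonneg (by positivity)]
        gcongr)
    rw [abs_of_nonneg (by linarith)] at this
    calc _ ≤ _ := le_abs_self _
      _ ≤ _ := this
      _ = _ := by ring
  · have e : ∫ t in (P-1)..Q, (x / t) ^ (0.6:ℝ) = ∫ t in (P-1)..Q, x ^ (0.6:ℝ) * t ^ (-0.6:ℝ) := by
      apply intervalIntegral.integral_congr
      intro t ht
      rw [uIcc_of_le (by linarith)] at ht
      have ht0 : 0 < t := by linarith [ht.1]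
      simp only
      rw [Real.div_rpow hx0.le ht0.le, Real.rpow_neg ht0.le]; rfl
    rw [e, intervalIntegral.integral_const_mul, integral_rpow (by left; norm_num)]
    have : 0 ≤ (P - 1) ^ (0.4:ℝ) := Real.rpow_nonneg (by linarith) _
    rw [show (-0.6:ℝ) + 1 = 0.4 by norm_num]
    have hp : 0 ≤ x ^ (0.6:ℝ) := by positivity
    calc x ^ (0.6:ℝ) * ((Q ^ (0.4:ℝ) - (P-1) ^ (0.4:ℝ)) / 0.4) ≤ x ^ (0.6:ℝ) * ((Q ^ (0.4:ℝ)) / 0.4) := by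
          gcongr; linarith
      _ = _ := by ring
open Classical in
lemma NDM_eq {r x : ℝ} (hx : 0 < x) :
    (NDM r x : ℝ) = ∑ p ∈ FF x, ∑ q ∈ FF x, if SS r x p q then (1:ℝ) else 0 := by
  rw [← Finset.sum_product', ← Finset.sum_filter, Finset.sum_const, nsmul_eq_mul, mul_one]
  congr 1
  unfold NDM
  refine Nat.subtype_card ((FF x ×ˢ FF x).filter fun a : ℕ × ℕ => SS r x a.1 a.2) ?_
  rintro ⟨p, q⟩
  rw [Finset.mem_filter, Finset.mem_product]
  simp only [Finset.mem_filter, FF, Finset.mem_range, Order.lt_add_one_iff,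
    Nat.le_floor_iff hx.le, SS]
  constructor
  · rintro ⟨⟨⟨-, h1⟩, -, h2⟩, h3⟩; exact ⟨h1, h2, h3⟩
  · rintro ⟨h1, h2, h3⟩
    refine ⟨⟨⟨?_, h1⟩, ?_, h2⟩, h3⟩
    · have : (1:ℝ) ≤ q := by exact_mod_cast h2.one_le
      have : (0:ℝ) ≤ p := by positivity
      nlinarith [h3.2.2.2]
    · have : (1:ℝ) ≤ p := by exact_mod_cast h1.one_le
      have : (0:ℝ) ≤ q := by positivity
      nlinarith [h3.2.2.2]

lemma SS_log {r x t u : ℝ} (hr : 1 < r) (hx : 0 < x) (ht : 0 < t) (hu : 0 < u)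
    (hL : 2 * Real.log r < Real.log x) (h : SS r x t u) :
    Real.log x * (Real.log x - 2 * Real.log r) / 4 ≤ Real.log t * Real.log u ∧
    Real.log t * Real.log u ≤ Real.log x ^ 2 / 4 := by
  obtain ⟨h1, h2, h3, h4⟩ := h
  have hr0 : 0 < r := by linarith
  have hR := Real.log_pos hr
  have k1 := Real.log_lt_log (by positivity) h1
  have k2 := Real.log_lt_log hu h2
  have k3 := Real.log_lt_log (by positivity) h3
  have k4 := Real.log_le_log (by positivity) h4
  rw [Real.log_div ht.ne' hr0.ne'] at k1
  rw [Real.log_mul hr0.ne' ht.ne'] at k2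
  rw [Real.log_div hx.ne' hr0.ne', Real.log_mul ht.ne' hu.ne'] at k3
  rw [Real.log_mul ht.ne' hu.ne'] at k4
  generalize Real.log r = R at *
  generalize Real.log x = L at *
  generalize Real.log t = a at *
  generalize Real.log u = b at *
  have c1 : (a - b) ^ 2 ≤ R ^ 2 := sq_le_sq' (by linarith) (by linarith)
  have c2 : (L - R) ^ 2 ≤ (a + b) ^ 2 := pow_le_pow_left₀ (by linarith) k3.le 2
  have c3 : (a + b) ^ 2 ≤ L ^ 2 := pow_le_pow_left₀ (by linarith) k4 2
  have c4 := sq_nonneg (a - b)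
  constructor <;> nlinarith

lemma NW {r x : ℝ} (hr : 1 < r) (hx : 0 < x) (hL : 2 * Real.log r < Real.log x) :
    (NDM r x : ℝ) * (Real.log x * (Real.log x - 2 * Real.log r) / 4) ≤
      ∑ p ∈ FF x, Real.log p * TT r x p ∧
    ∑ p ∈ FF x, Real.log p * TT r x p ≤ NDM r x * (Real.log x ^ 2 / 4) := by
  rw [NDM_eq hx]
  have hpos : ∀ q ∈ FF x, (0:ℝ) < q := by
    intro q hq
    unfold FF at hq
    exact_mod_cast (Finset.mem_filter.1 hq).2.pos
  simp only [Finset.sum_mul]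
  unfold TT
  simp only [Finset.mul_sum]
  constructor
  · refine Finset.sum_le_sum fun p hp => Finset.sum_le_sum fun q hq => ?_
    by_cases h : SS r x p q
    · rw [if_pos h, if_pos h, one_mul]
      exact (SS_log hr hx (hpos p hp) (hpos q hq) hL h).1
    · rw [if_neg h, if_neg h]; simp
  · refine Finset.sum_le_sum fun p hp => Finset.sum_le_sum fun q hq => ?_
    by_cases h : SS r x p q
    · rw [if_pos h, if_pos h, one_mul]
      exact (SS_log hr hx (hpos p hp) (hpos q hq) hL h).2
    · rw [if_neg h, if_neg h]; simp

lemma clamp_aux {N M l h B : ℝ} (hM : 0 < M) (hlh : l ≤ h) (h1 : l * M - B ≤ N) (h2 : N ≤ h * M + B)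
    (hB : 0 ≤ B) :
    ∃ a ∈ Set.Icc l h, |N - a * M| ≤ B := by
  rcases lt_or_ge N (l * M) with hc | hc
  · refine ⟨l, ⟨le_rfl, hlh⟩, ?_⟩
    rw [abs_le]; constructor <;> linarith
  rcases lt_or_ge (h * M) N with hc' | hc'
  · refine ⟨h, ⟨hlh, le_rfl⟩, ?_⟩
    rw [abs_le]; constructor <;> linarith
  · refine ⟨N / M, ⟨?_, ?_⟩, ?_⟩
    · rwa [le_div_iff₀ hM]
    · rwa [div_le_iff₀ hM]
    · rw [div_mul_cancel₀ _ hM.ne']; simpa using hB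

lemma alg_aux {N W A B L R D : ℝ} (hR : 0 < R) (hLR : 2 * R + 4 ≤ L) (hA : 0 < A)
    (hD : 0 ≤ D)
    (h1 : N * (L * (L - 2 * R) / 4) ≤ W) (h2 : W ≤ N * (L ^ 2 / 4)) (hW : |W - A| ≤ L * D)
    (hS : D ≤ B + 3 * A * R / L ^ 3) :
    4 * A / (L + R) ^ 2 - B ≤ N ∧ N ≤ 4 * A / (L - 2 * R) ^ 2 + B := by
  have hL : 0 < L := by linarith
  have hM : 0 < L - 2 * R := by linarith
  rw [abs_le] at hW
  have n1 : 4 * A / L ^ 2 - D ≤ N := by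
    have : 4 * (A - L * D) / L ^ 2 ≤ N := by
      rw [div_le_iff₀ (by positivity)]; linarith
    have e : 4 * (A - L * D) / L ^ 2 = 4 * A / L ^ 2 - 4 / L * D := by field_simp
    have : 4 / L ≤ 1 := by rw [div_le_one hL]; linarith
    nlinarith
  have n2 : N ≤ 4 * A / (L * (L - 2 * R)) + D := by
    have : N ≤ 4 * (A + L * D) / (L * (L - 2 * R)) := by
      rw [le_div_iff₀ (by positivity)]; linarith
    have e : 4 * (A + L * D) / (L * (L - 2 * R)) = 4 * A / (L * (L - 2 * R)) + 4 / (L - 2 * R) * D := by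
      field_simp
    have : 4 / (L - 2 * R) ≤ 1 := by rw [div_le_one hM]; linarith
    nlinarith
  have s1 : 3 * A * R / L ^ 3 ≤ 4 * A / L ^ 2 - 4 * A / (L + R) ^ 2 := by
    have e : 4 * A / L ^ 2 - 4 * A / (L + R) ^ 2 = A * R * (4 * (2 * L + R) / (L ^ 2 * (L + R) ^ 2)) := by
      field_simp; ring
    have e' : 3 * A * R / L ^ 3 = A * R * (3 / L ^ 3) := by ring
    rw [e, e']
    apply mul_le_mul_of_nonneg_left _ (by positivity)
    rw [div_le_div_iff₀ (by positivity) (by positivity)]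
    have : 3 * (L + R) ^ 2 ≤ 4 * (2 * L + R) * L := by nlinarith
    have := mul_le_mul_of_nonneg_left this (sq_nonneg L)
    nlinarith
  have s2 : 3 * A * R / L ^ 3 ≤ 4 * A / (L - 2 * R) ^ 2 - 4 * A / (L * (L - 2 * R)) := by
    have e : 4 * A / (L - 2 * R) ^ 2 - 4 * A / (L * (L - 2 * R)) =
        A * R * (8 / (L * (L - 2 * R) ^ 2)) := by
      field_simp; ring
    have e' : 3 * A * R / L ^ 3 = A * R * (3 / L ^ 3) := by ring
    rw [e, e']
    apply mul_le_mul_of_nonneg_left _ (by positivity)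
    have : L ^ 3 = L * L ^ 2 := by ring
    rw [this]
    have hh : L - 2 * R ≤ L := by linarith
    gcongr
    norm_num
  constructor <;> linarith


end Aux

/-- Theorem 4.2 of the paper (count of de Weger RSA integers, under RH). -/
theorem NDM_asymptotics (hRH : RiemannHypothesis) :
    ∃ C : ℝ, 0 < C ∧ ∀ r x : ℝ, 1 < r → 2 * Real.log r < Real.log x →
      (2657 : ℝ) ≤ Real.sqrt x / r →
      ∃ atil ∈ Set.Icc ((1 - Real.log r / (Real.log x + Real.log r)) ^ 2)
                       ((1 + 2 * Real.log r / (Real.log x - 2 * Real.log r)) ^ 2),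
        |(NDM r x : ℝ)
            - atil * (4 * x / (Real.log x) ^ 2) * (Real.log r - Real.log r / r)|
          ≤ C * x ^ ((3 : ℝ) / 4) * r ^ ((1 : ℝ) / 2) := by
  obtain ⟨K, hK0, hK⟩ := theta_asymp hRH
  obtain ⟨B, hB, H⟩ := anal_aux (4 * K) (by positivity)
  refine ⟨B, hB, fun r x hr hLx hP => ?_⟩
  have hr0 : 0 < r := by linarith
  have hm : 2657 * r ≤ √x := by rwa [le_div_iff₀ hr0] at hP
  have hx0 : 0 < x := Real.sqrt_pos.1 (by linarith)
  have hxm : √x * √x = x := Real.mul_self_sqrt hx0.le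
  have hR := Real.log_pos hr
  have hLR : 2 * Real.log r + 4 ≤ Real.log x := by
    have h2 : Real.log (2657 * r) ≤ Real.log √x := Real.log_le_log (by positivity) hm
    rw [Real.log_mul (by norm_num) hr0.ne', Real.log_sqrt hx0.le] at h2
    have h3 : 2 ≤ Real.log 2657 := by
      have : Real.log (2 ^ 4) ≤ Real.log 2657 := Real.log_le_log (by norm_num) (by norm_num)
      rw [Real.log_pow] at this
      have := Real.log_two_gt_d9
      push_cast at *
      linarith
    linarith
  obtain ⟨j1, j2⟩ := J_bd hr hP
  have hWA := WA hr hP (by linarith) hK0 hK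
  have hH := H r x _ hr hLx hP j1 j2
  obtain ⟨w1, w2⟩ := NW hr hx0 hLx
  set J := ∫ t in (√x / r - 1)..√(x * r), (x / t) ^ (0.6:ℝ) with hJ
  have h1r : 0 < 1 - 1 / r := by
    have : 1 / r < 1 := by rw [div_lt_one hr0]; exact hr
    linarith
  have hJ0 : 0 ≤ 4 * K * J := by
    have := (abs_nonneg _).trans hWA
    rw [show 4 * K * Real.log x * J = Real.log x * (4 * K * J) by ring] at this
    exact nonneg_of_mul_nonneg_right this (by linarith)
  obtain ⟨a1, a2⟩ := alg_aux (B := B * x ^ ((3 : ℝ) / 4) * r ^ ((1 : ℝ) / 2)) (D := 4 * K * J)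
    hR hLR (by positivity : 0 < x * (1 - 1 / r) * Real.log r) hJ0 w1 w2
    (by rw [show Real.log x * (4 * K * J) = 4 * K * Real.log x * J by ring]; exact hWA) hH
  have hL0 : 0 < Real.log x := by linarith
  have hM0 : 0 < Real.log x - 2 * Real.log r := by linarith
  have hMM : 4 * x / Real.log x ^ 2 * (Real.log r - Real.log r / r)
      = 4 * (x * (1 - 1 / r) * Real.log r) / Real.log x ^ 2 := by ring
  simp only [mul_assoc _ (4 * x / Real.log x ^ 2), hMM]
  apply clamp_aux
  · positivity
  · have c1 : 0 ≤ Real.log r / (Real.log x + Real.log r) := by positivity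
    have c2 : 0 ≤ 2 * Real.log r / (Real.log x - 2 * Real.log r) := by positivity
    have c3 : Real.log r / (Real.log x + Real.log r) ≤ 1 := by
      rw [div_le_one (by positivity)]; linarith
    apply pow_le_pow_left₀ <;> linarith
  · convert a1 using 2
    rw [show 1 - Real.log r / (Real.log x + Real.log r) = Real.log x / (Real.log x + Real.log r) by
      field_simp; ring]
    field_simp
  · convert a2 using 2
    rw [show 1 + 2 * Real.log r / (Real.log x - 2 * Real.log r) = Real.log x / (Real.log x - 2 * Real.log r) by
      field_simp; ring]
    field_simp
  · positivity
end
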